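/- Let M = {F = 0} be a germ of an irreducible singular real-analytic Levi-flat hypersurface at 0 ∈ ℂⁿ, n ≥ 2, such that F(z) = Re(z₁ ⋯ zₙ) + H(z, z̄), where H(z, z̄) = O(|z|^{n+1}) and H(z, z̄) = conj(H(z̄, z)). Suppose that Sing(M_ℂ) equals the union over all 1 ≤ i < j ≤ n and 1 ≤ k < ℓ ≤ n of the linear subspaces V_{ijkℓ} = {(z,w) ∈ ℂⁿ × ℂⁿ : z_i = z_j = w_k = w_ℓ = 0}, and that Sing(M_ℂ) is contained in the closure of Sing(L_ℂ). Then there exists a germ of holomorphic function f at 0 ∈ ℂⁿ with f(z) = z₁ ⋯ zₙ + O(|z|^{n+1}) such that M = {Re(f) = 0} as germs of sets at 0. -/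

import Mathlib

/-!
The idea is to find, on the complexified hypersurface `{F_ℂ = 0}` in the variables `(z, w)`, a
holomorphic first integral of the Levi foliation in separated form `a(z) + d(w)`, and to divide it
by `F_ℂ`.

Since `F_ℂ = (z₁⋯zₙ + w₁⋯wₙ) / 2 + O(n + 1)`, a dilation turns `2 F_ℂ` into a function `G` which, on
a ball of a large prescribed radius, is as close as needed to the model `mon = z₁⋯zₙ + w₁⋯wₙ`
(`NearMon`). Fix an index `e`. Where the coordinates of index `≠ e` of `w` stay in an annulus, the
equation `G = 0` is solved for `w_e` by a holomorphic function `γ (z, w)` (`exists_solution`), which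
is defined for all `z` in a polydisc around the origin.

Levi-flatness says that at real points `(p, p̄)` of `{G = 0}` the mixed second derivative of `G`
vanishes on `ker ∂_z G × ker ∂_w G` (`levi_complexified`). Real points are a uniqueness set, so the
same holds on the whole chart (`levi_on_chart`). Consequently `ker ∂_z G` at a zero `(z, w)` depends
on `z` only (`ker_dz_indep`), and `a z = γ (z, 1)` is constant along the leaves `{z : G (z, w) = 0}`.
Its value on the leaf of `w` is `- d w`; so `a z + d w = 0` on the chart, while `a` and `d` are
holomorphic on full polydiscs around the origin (`exists_first_integral`).

A Cauchy integral over circles in the direction `z ↦ z + (t, …, t)` shows that `a z + d w = U G` near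
the origin with `U(0) ≠ 0` (`exists_unit`). Scaling back, `a z + d w = U F_ℂ`
(`exists_decomposition`). With `κ = 1 / U(0)`, the function
`f(z) = κ a(z) + conj (κ d(z̄)) - const` satisfies `Re f = Re (κ U(z, z̄)) F`, where
`Re (κ U(z, z̄))` tends to `1`, and comparing terms of lowest order gives `f = z₁⋯zₙ + O(n + 1)`.
-/

open Filter Topology

/-- Wirtinger derivative ∂/∂z_j of a (complex-valued) function at `p`:
`(1/2)(∂F/∂x_j − i ∂F/∂y_j)`. -/
noncomputable def wirtZ {n : ℕ} (F : (Fin n → ℂ) → ℂ) (j : Fin n) (p : Fin n → ℂ) : ℂ :=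
  (fderiv ℝ F p (Pi.single j 1) - Complex.I * fderiv ℝ F p (Pi.single j Complex.I)) / 2

/-- Wirtinger derivative ∂/∂z̄_j of a (complex-valued) function at `p`:
`(1/2)(∂F/∂x_j + i ∂F/∂y_j)`. -/
noncomputable def wirtZbar {n : ℕ} (F : (Fin n → ℂ) → ℂ) (j : Fin n) (p : Fin n → ℂ) : ℂ :=
  (fderiv ℝ F p (Pi.single j 1) + Complex.I * fderiv ℝ F p (Pi.single j Complex.I)) / 2

/-- The germ `M = {F = 0}` at `0` is Levi-flat: for every point `p` of `M* = M \ Sing(M)`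
near `0` and every `v` with `Σ_j F_{z_j}(p) v_j = 0` one has
`Σ_{i,j} F_{z_i z̄_j}(p) v_i conj(v_j) = 0`. -/
def LeviFlatGerm {n : ℕ} (F : (Fin n → ℂ) → ℝ) : Prop :=
  ∀ᶠ p in 𝓝 (0 : Fin n → ℂ), F p = 0 → fderiv ℝ F p ≠ 0 →
    ∀ v : Fin n → ℂ,
      (∑ j, wirtZ (fun z => ((F z : ℝ) : ℂ)) j p * v j) = 0 →
      (∑ i, ∑ j, wirtZbar (wirtZ (fun z => ((F z : ℝ) : ℂ)) i) j p * v i * (starRingEnd ℂ) (v j)) = 0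

/-- `F` is irreducible in the ring of germs at `0` of real-valued real-analytic functions:
in any factorization `F = g·h` one of the factors is a unit (i.e. does not vanish at `0`). -/
def IrreducibleRGerm {n : ℕ} (F : (Fin n → ℂ) → ℝ) : Prop :=
  ∀ g h : (Fin n → ℂ) → ℝ, AnalyticAt ℝ g 0 → AnalyticAt ℝ h 0 →
    (∀ᶠ z in 𝓝 (0 : Fin n → ℂ), F z = g z * h z) → g 0 ≠ 0 ∨ h 0 ≠ 0

/-- `φ` is a germ of biholomorphism `(ℂⁿ,0) → (ℂⁿ,0)` with local inverse `ι`. -/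
def IsGermBiholo {n : ℕ} (φ ι : (Fin n → ℂ) → (Fin n → ℂ)) : Prop :=
  AnalyticAt ℂ φ 0 ∧ AnalyticAt ℂ ι 0 ∧ φ 0 = 0 ∧ ι 0 = 0 ∧
  (∀ᶠ z in 𝓝 (0 : Fin n → ℂ), ι (φ z) = z) ∧ (∀ᶠ z in 𝓝 (0 : Fin n → ℂ), φ (ι z) = z)

/-- `φ` is volume-preserving (isochore): the determinant of its complex Jacobian is
identically `1` near `0`. -/
def IsVolumePreserving {n : ℕ} (φ : (Fin n → ℂ) → (Fin n → ℂ)) : Prop :=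
  ∀ᶠ z in 𝓝 (0 : Fin n → ℂ), LinearMap.det ((fderiv ℂ φ z).toLinearMap) = 1

/-- `ψ` is a germ of automorphism of `(ℂ,0)`. -/
def IsGermAuto (ψ : ℂ → ℂ) : Prop :=
  AnalyticAt ℂ ψ 0 ∧ ψ 0 = 0 ∧ deriv ψ 0 ≠ 0

/-- `FC` is the complexification of `F`: the (unique) germ of holomorphic function at
`0 ∈ ℂⁿ × ℂⁿ` such that `FC (z, z̄) = F z` near `0`. -/
def IsComplexification {n : ℕ} (F : (Fin n → ℂ) → ℝ)
    (FC : ((Fin n → ℂ) × (Fin n → ℂ)) → ℂ) : Prop :=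
  AnalyticAt ℂ FC 0 ∧ ∀ᶠ z in 𝓝 (0 : Fin n → ℂ), FC (z, star z) = ((F z : ℝ) : ℂ)

/-- The singular set `Sing(M_ℂ) = {F_ℂ = 0} ∩ {dF_ℂ = 0}` of the complexification. -/
def singMC {n : ℕ} (FC : ((Fin n → ℂ) × (Fin n → ℂ)) → ℂ) :
    Set ((Fin n → ℂ) × (Fin n → ℂ)) :=
  {p | FC p = 0 ∧ fderiv ℂ FC p = 0}

/-- The singular set of the complexified Levi foliation `L_ℂ`: points of
`M*_ℂ` at which `α = Σ_j (∂F_ℂ/∂z_j) dz_j` vanishes on `T_p M_ℂ = ker dF_ℂ(p)`.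
Note that `α(p)(v) = dF_ℂ(p)(v₁, 0)`. -/
def singLC {n : ℕ} (FC : ((Fin n → ℂ) × (Fin n → ℂ)) → ℂ) :
    Set ((Fin n → ℂ) × (Fin n → ℂ)) :=
  {p | FC p = 0 ∧ fderiv ℂ FC p ≠ 0 ∧
    ∀ v : (Fin n → ℂ) × (Fin n → ℂ), fderiv ℂ FC p v = 0 → fderiv ℂ FC p (v.1, 0) = 0}

/-! ### Levi-flatness on the complexification -/

/-- The real-linear embedding `z ↦ (z, z̄)` of `ℂⁿ` onto the totally real diagonal. -/
noncomputable def diagL (n : ℕ) : (Fin n → ℂ) →L[ℝ] (Fin n → ℂ) × (Fin n → ℂ) :=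
  (ContinuousLinearMap.id ℝ _).prod ((starL' ℝ : (Fin n → ℂ) ≃L[ℝ] (Fin n → ℂ)) : _ →L[ℝ] _)

theorem diagL_apply {n : ℕ} (z : Fin n → ℂ) : diagL n z = (z, star z) := rfl

theorem tendsto_diag {n : ℕ} :
    Tendsto (fun z : Fin n → ℂ => (z, star z)) (𝓝 0) (𝓝 (0 : (Fin n → ℂ) × (Fin n → ℂ))) := by
  have := (diagL n).continuous.tendsto 0
  rwa [map_zero] at this

/-- Chain rule for the restriction of a holomorphic function to the diagonal `{(z, z̄)}`. -/
theorem hasFDerivAt_real_points {n : ℕ} {K : (Fin n → ℂ) × (Fin n → ℂ) → ℂ}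
    {K' : (Fin n → ℂ) × (Fin n → ℂ) →L[ℂ] ℂ} {p : Fin n → ℂ}
    (hK : HasFDerivAt K K' (p, star p)) :
    HasFDerivAt (fun z : Fin n → ℂ => K (z, star z))
      ((K'.restrictScalars ℝ).comp (diagL n)) p :=
  (hK.restrictScalars ℝ).comp p (diagL n).hasFDerivAt

theorem star_single_I {n : ℕ} (j : Fin n) :
    star (Pi.single j Complex.I : Fin n → ℂ) = -(Complex.I • Pi.single j 1) := by
  ext i
  rcases eq_or_ne i j with rfl | h <;> simp [*]

theorem single_I {n : ℕ} (j : Fin n) :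
    (Pi.single j Complex.I : Fin n → ℂ) = Complex.I • Pi.single j 1 := by
  ext i
  rcases eq_or_ne i j with rfl | h <;> simp [*]

theorem star_single_one {n : ℕ} (j : Fin n) :
    star (Pi.single j 1 : Fin n → ℂ) = Pi.single j 1 := by
  ext i
  rcases eq_or_ne i j with rfl | h <;> simp [*]

theorem clm_split {n : ℕ} (K' : (Fin n → ℂ) × (Fin n → ℂ) →L[ℂ] ℂ) (v w : Fin n → ℂ) :
    K' (v, w) = K' (v, 0) + K' (0, w) := by
  rw [← map_add]; simp

theorem clm_smul_left {n : ℕ} (K' : (Fin n → ℂ) × (Fin n → ℂ) →L[ℂ] ℂ) (c : ℂ)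
    (v : Fin n → ℂ) : K' (c • v, 0) = c * K' (v, 0) := by
  rw [← smul_eq_mul, ← map_smul]; simp

theorem clm_smul_right {n : ℕ} (K' : (Fin n → ℂ) × (Fin n → ℂ) →L[ℂ] ℂ) (c : ℂ)
    (v : Fin n → ℂ) : K' (0, c • v) = c * K' (0, v) := by
  rw [← smul_eq_mul, ← map_smul]; simp

/-- `∂/∂z_j` of `K (z, z̄)` is the derivative of `K` in the `j`-th coordinate of the first
variable. -/
theorem wirtZ_real_points {n : ℕ} {K : (Fin n → ℂ) × (Fin n → ℂ) → ℂ}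
    {K' : (Fin n → ℂ) × (Fin n → ℂ) →L[ℂ] ℂ} {p : Fin n → ℂ}
    (hK : HasFDerivAt K K' (p, star p)) (j : Fin n) :
    wirtZ (fun z => K (z, star z)) j p = K' (Pi.single j 1, 0) := by
  rw [wirtZ, (hasFDerivAt_real_points hK).fderiv]
  simp only [ContinuousLinearMap.coe_comp, ContinuousLinearMap.coe_restrictScalars',
    Function.comp_apply, diagL_apply]
  rw [star_single_I, star_single_one, single_I, clm_split K', clm_split K' (Complex.I • _),
    ← smul_neg, clm_smul_left, clm_smul_right, ← neg_one_smul ℂ, clm_smul_right]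
  ring_nf
  simp
  ring

/-- `∂/∂z̄_j` of `K (z, z̄)` is the derivative of `K` in the `j`-th coordinate of the second
variable. -/
theorem wirtZbar_real_points {n : ℕ} {K : (Fin n → ℂ) × (Fin n → ℂ) → ℂ}
    {K' : (Fin n → ℂ) × (Fin n → ℂ) →L[ℂ] ℂ} {p : Fin n → ℂ}
    (hK : HasFDerivAt K K' (p, star p)) (j : Fin n) :
    wirtZbar (fun z => K (z, star z)) j p = K' (0, Pi.single j 1) := by
  rw [wirtZbar, (hasFDerivAt_real_points hK).fderiv]
  simp only [ContinuousLinearMap.coe_comp, ContinuousLinearMap.coe_restrictScalars',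
    Function.comp_apply, diagL_apply]
  rw [star_single_I, star_single_one, single_I, clm_split K', clm_split K' (Complex.I • _),
    ← smul_neg, clm_smul_left, clm_smul_right, ← neg_one_smul ℂ, clm_smul_right]
  ring_nf
  simp
  ring

theorem clm_sum_left {n : ℕ} (K' : (Fin n → ℂ) × (Fin n → ℂ) →L[ℂ] ℂ)
    (v : Fin n → ℂ) : K' (v, 0) = ∑ j, K' (Pi.single j 1, 0) * v j := by
  have := (K'.comp (ContinuousLinearMap.inl ℂ _ _)).toLinearMap.pi_apply_eq_sum_univ v
  simp only [ContinuousLinearMap.coe_coe, ContinuousLinearMap.comp_apply,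
    ContinuousLinearMap.inl_apply] at this
  rw [this]
  refine Finset.sum_congr rfl fun j _ => ?_
  rw [smul_eq_mul, mul_comm]
  congr 3
  ext i
  simp [Pi.single_apply, eq_comm]

theorem clm_sum_right {n : ℕ} (K' : (Fin n → ℂ) × (Fin n → ℂ) →L[ℂ] ℂ)
    (v : Fin n → ℂ) : K' (0, v) = ∑ j, K' (0, Pi.single j 1) * v j := by
  have := (K'.comp (ContinuousLinearMap.inr ℂ _ _)).toLinearMap.pi_apply_eq_sum_univ v
  simp only [ContinuousLinearMap.coe_coe, ContinuousLinearMap.comp_apply,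
    ContinuousLinearMap.inr_apply] at this
  rw [this]
  refine Finset.sum_congr rfl fun j _ => ?_
  rw [smul_eq_mul, mul_comm]
  congr 3
  ext i
  simp [Pi.single_apply, eq_comm]

/-- Levi-flatness in terms of the complexification: at the smooth real points of `{F_ℂ = 0}` the
mixed second derivative vanishes on `ker ∂_z F_ℂ × ker ∂_w F_ℂ`. Levi-flatness itself is the case
`u = v̄`; the general case follows by polarization. -/
theorem levi_complexified {n : ℕ} {F : (Fin n → ℂ) → ℝ} (hLF : LeviFlatGerm F)
    {FC : (Fin n → ℂ) × (Fin n → ℂ) → ℂ} (hFC : IsComplexification F FC) :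
    ∀ᶠ p in 𝓝 (0 : Fin n → ℂ), FC (p, star p) = 0 → fderiv ℂ FC (p, star p) ≠ 0 →
      ∀ v u : Fin n → ℂ, fderiv ℂ FC (p, star p) (v, 0) = 0 →
        fderiv ℂ FC (p, star p) (0, u) = 0 →
        fderiv ℂ (fderiv ℂ FC) (p, star p) (0, u) (v, 0) = 0 := by
  obtain ⟨han, hev⟩ := hFC
  have han' := tendsto_diag.eventually han.eventually_analyticAt
  filter_upwards [hLF, hev.eventually_nhds, han'.eventually_nhds] with p hL hE hA h0 hne v u hv hu
  have hFeq : (fun z => ((F z : ℝ) : ℂ)) =ᶠ[𝓝 p] fun z => FC (z, star z) := by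
    filter_upwards [hE] with z hz using hz.symm
  have hAp : AnalyticAt ℂ FC (p, star p) := hA.self_of_nhds
  have hd := hasFDerivAt_real_points hAp.differentiableAt.hasFDerivAt
  set D := fderiv ℂ FC (p, star p) with hD
  have hdapp : ∀ v, fderiv ℝ (fun z => FC (z, star z)) p v = D (v, star v) := by
    intro v; rw [hd.fderiv]; rfl
  -- `F` is the real part of the restriction of `FC`
  have hFre : F =ᶠ[𝓝 p] fun z => (FC (z, star z)).re := by
    filter_upwards [hE] with z hz
    rw [hz]; simp
  have hFd : DifferentiableAt ℝ F p := by
    have : DifferentiableAt ℝ (fun z => (FC (z, star z)).re) p :=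
      Complex.reCLM.differentiableAt.comp p hd.differentiableAt
    exact this.congr_of_eventuallyEq hFre
  have hFc : ∀ v, D (v, star v) = ((fderiv ℝ F p v : ℝ) : ℂ) := by
    intro v
    rw [← hdapp, ← hFeq.fderiv_eq]
    have := Complex.ofRealCLM.hasFDerivAt.comp p hFd.hasFDerivAt
    have h2 := this.fderiv
    change fderiv ℝ (fun z => ((F z : ℝ) : ℂ)) p = _ at h2
    rw [h2]; rfl
  have hIapp : ∀ v, D (v, 0) * Complex.I - D (0, star v) * Complex.I
      = ((fderiv ℝ F p (Complex.I • v) : ℝ) : ℂ) := by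
    intro v
    rw [← hFc, clm_split D (Complex.I • v), clm_smul_left, star_smul, clm_smul_right]
    simp; ring
  have hsum : ∀ v, D (v, 0) + D (0, star v) = ((fderiv ℝ F p v : ℝ) : ℂ) := by
    intro v; rw [← hFc, ← clm_split]
  have hconj : ∀ v, D (v, 0) = 0 ↔ D (0, star v) = 0 := by
    intro v
    have h1 := hIapp v
    have h2 := hsum v
    rw [Complex.ext_iff] at h1 h2
    simp at h1 h2
    rw [Complex.ext_iff, Complex.ext_iff]
    simp only [Complex.zero_re, Complex.zero_im]
    constructor
    · rintro ⟨a, b⟩; constructor <;> linarith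
    · rintro ⟨a, b⟩; constructor <;> linarith
  have hF0 : F p = 0 := by
    have := hE.self_of_nhds
    rw [h0] at this
    exact_mod_cast this.symm
  have hdF : fderiv ℝ F p ≠ 0 := by
    intro h
    apply hne
    have hA0 : ∀ v, D (v, 0) = 0 := by
      intro v
      have h1 := hIapp v
      have h2 := hsum v
      rw [h] at h1 h2
      simp only [zero_apply, Complex.ofReal_zero] at h1 h2
      rw [← sub_mul, mul_eq_zero] at h1
      have h3 := h1.resolve_right Complex.I_ne_zero
      linear_combination (h2 + h3) / 2
    refine ContinuousLinearMap.ext fun ⟨v, w⟩ => ?_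
    rw [clm_split, hA0]
    have := (hconj (star w)).1 (hA0 _)
    rw [star_star] at this
    rw [this]; simp
  set D2 := fderiv ℂ (fderiv ℂ FC) (p, star p) with hD2
  have hw : ∀ᶠ z in 𝓝 p, ∀ i, wirtZ (fun z => ((F z : ℝ) : ℂ)) i z
      = fderiv ℂ FC (z, star z) (Pi.single i 1, 0) := by
    filter_upwards [hA, hE.eventually_nhds] with z hAz hEz i
    rw [← wirtZ_real_points hAz.differentiableAt.hasFDerivAt]
    have : (fun z => ((F z : ℝ) : ℂ)) =ᶠ[𝓝 z] fun z => FC (z, star z) := by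
      filter_upwards [hEz] with z hz using hz.symm
    rw [wirtZ, wirtZ, this.fderiv_eq]
  have hwb : ∀ i j, wirtZbar (wirtZ (fun z => ((F z : ℝ) : ℂ)) i) j p
      = D2 (0, Pi.single j 1) (Pi.single i 1, 0) := by
    intro i j
    have h1 : wirtZ (fun z => ((F z : ℝ) : ℂ)) i
        =ᶠ[𝓝 p] fun z => (fun q => fderiv ℂ FC q (Pi.single i 1, 0)) (z, star z) := by
      filter_upwards [hw] with z hz using hz i
    have h2 : HasFDerivAt (fun q => fderiv ℂ FC q (Pi.single i 1, 0))
        (((ContinuousLinearMap.apply ℂ ℂ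
          ((Pi.single i 1, 0) : (Fin n → ℂ) × (Fin n → ℂ)))).comp D2) (p, star p) :=
      (ContinuousLinearMap.apply ℂ ℂ ((Pi.single i 1, 0) : (Fin n → ℂ) × (Fin n → ℂ))).hasFDerivAt.comp
        _ hAp.fderiv.differentiableAt.hasFDerivAt
    have h3 := wirtZbar_real_points h2 j
    rw [wirtZbar, h1.fderiv_eq, ← wirtZbar, h3]
    rfl
  have hdiag : ∀ v, D (v, 0) = 0 → D2 (0, star v) (v, 0) = 0 := by
    intro v hv
    have := hL hF0 hdF v (by
      rw [← hv, clm_sum_left]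
      refine Finset.sum_congr rfl fun j _ => ?_
      rw [hw.self_of_nhds j])
    rw [← this, clm_sum_left]
    refine Finset.sum_congr rfl fun i _ => ?_
    have h2 := clm_sum_right ((ContinuousLinearMap.apply ℂ ℂ
      ((Pi.single i 1, 0) : (Fin n → ℂ) × (Fin n → ℂ))).comp D2) (star v)
    simp only [ContinuousLinearMap.comp_apply, ContinuousLinearMap.apply_apply] at h2
    rw [h2, Finset.sum_mul]
    refine Finset.sum_congr rfl fun j _ => ?_
    rw [hwb]
    simp only [Pi.star_apply, RCLike.star_def]
    ring
  -- polarization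
  have hadd : ∀ a b c d : Fin n → ℂ, D2 (0, a + b) (c + d, 0)
      = D2 (0, a) (c, 0) + D2 (0, a) (d, 0) + D2 (0, b) (c, 0) + D2 (0, b) (d, 0) := by
    intro a b c d
    have e1 : ((0, a + b) : (Fin n → ℂ) × (Fin n → ℂ)) = (0, a) + (0, b) := by simp
    have e2 : ((c + d, 0) : (Fin n → ℂ) × (Fin n → ℂ)) = (c, 0) + (d, 0) := by simp
    rw [e1, e2]; simp only [map_add, add_apply]; ring
  have hsm1 : ∀ (s : ℂ) (a c : Fin n → ℂ), D2 (0, s • a) (c, 0) = s * D2 (0, a) (c, 0) := by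
    intro s a c
    have e1 : ((0, s • a) : (Fin n → ℂ) × (Fin n → ℂ)) = s • (0, a) := by simp
    rw [e1, map_smul]; rfl
  have hw0 : D (star u, 0) = 0 := by rw [hconj, star_star]; exact hu
  have k1 := hdiag (v + star u) (by
    rw [show ((v + star u, 0) : (Fin n → ℂ) × (Fin n → ℂ)) = (v, 0) + (star u, 0) by simp,
      map_add, hv, hw0, add_zero])
  have k2 := hdiag (v + Complex.I • star u) (by
    rw [show ((v + Complex.I • star u, 0) : (Fin n → ℂ) × (Fin n → ℂ))
      = (v, 0) + Complex.I • (star u, 0) by simp, map_add, map_smul, hv, hw0]; simp)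
  rw [star_add, hadd, hdiag v hv, hdiag _ hw0, star_star] at k1
  rw [star_add, hadd, hdiag v hv, star_smul, star_star, hsm1, hsm1, clm_smul_left,
    clm_smul_left] at k2
  have k3 := hdiag _ hw0
  rw [star_star] at k3
  rw [k3] at k2
  simp only [RCLike.star_def, Complex.conj_I, mul_zero, add_zero, zero_add] at k1 k2
  have k4 : Complex.I * (D2 (0, star v) (star u, 0) - D2 (0, u) (v, 0)) = 0 := by
    linear_combination k2
  have k5 := (mul_eq_zero.1 k4).resolve_left Complex.I_ne_zero
  linear_combination (k1 - k5) / 2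

/-! ### Holomorphic functions and the real diagonal -/

/-- The diagonal `{(z, z̄)}` is a uniqueness set for holomorphic functions. Every point near it
lies at parameter `s = i` on a complex line `s ↦ (α + s β, ᾱ + s β̄)`, whose points with real `s`
are on the diagonal. -/
theorem eq_zero_of_real_points {n : ℕ} {K : (Fin n → ℂ) × (Fin n → ℂ) → ℂ} {p : Fin n → ℂ}
    {r : ℝ} (hK : DifferentiableOn ℂ K (Metric.ball (p, star p) r))
    (h0 : ∀ z ∈ Metric.ball p r, K (z, star z) = 0) :
    ∀ q ∈ Metric.ball (p, star p) (r / 4), K q = 0 := by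
  rintro ⟨z, w⟩ hq
  rw [Metric.mem_ball, Prod.dist_eq, max_lt_iff, dist_eq_norm, dist_eq_norm] at hq
  obtain ⟨hz, hw⟩ := hq
  simp only at hz hw
  set α : Fin n → ℂ := (2 : ℂ)⁻¹ • (z + star w) with hα
  set β : Fin n → ℂ := (2 * Complex.I)⁻¹ • (z - star w) with hβ
  have hαn : ‖α - p‖ < r / 4 := by
    have e : α - p = (2 : ℂ)⁻¹ • ((z - p) + star (w - star p)) := by
      rw [hα]; ext i; simp; ring
    rw [e, norm_smul]
    have := norm_add_le (z - p) (star (w - star p))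
    rw [norm_star] at this
    simp only [norm_inv, Complex.norm_ofNat]
    linarith
  have hβn : ‖β‖ < r / 4 := by
    have e : β = (2 * Complex.I)⁻¹ • ((z - p) - star (w - star p)) := by
      rw [hβ]; ext i; simp
    rw [e, norm_smul]
    have := norm_sub_le (z - p) (star (w - star p))
    rw [norm_star] at this
    simp only [norm_inv, Complex.norm_ofNat, norm_mul, Complex.norm_I]
    linarith
  have hball : ∀ s : ℂ, ‖s‖ < 2 → ‖α + s • β - p‖ < r ∧ ‖star α + s • star β - star p‖ < r := by
    intro s hs
    have hr := norm_nonneg β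
    have h1 : ‖s • β‖ ≤ 2 * (r / 4) := by
      rw [norm_smul]
      exact mul_le_mul hs.le hβn.le (norm_nonneg _) (by norm_num)
    constructor
    · have e : α + s • β - p = (α - p) + s • β := by abel
      rw [e]; have := norm_add_le (α - p) (s • β); linarith
    · have e : star α + s • star β - star p = star (α - p) + s • star β := by
        rw [star_sub]; abel
      rw [e]; have := norm_add_le (star (α - p)) (s • star β)
      rw [norm_star, norm_smul s, norm_star, ← norm_smul] at this; linarith
  let c : ℂ → (Fin n → ℂ) × (Fin n → ℂ) := fun s => (α + s • β, star α + s • star β)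
  have hc : Differentiable ℂ c := by
    intro s; fun_prop
  have hφ : AnalyticOnNhd ℂ (fun s => K (c s)) (Metric.ball 0 2) := by
    apply DifferentiableOn.analyticOnNhd _ Metric.isOpen_ball
    refine hK.comp hc.differentiableOn ?_
    intro s hs
    rw [mem_ball_zero_iff] at hs
    rw [Metric.mem_ball, Prod.dist_eq, max_lt_iff, dist_eq_norm, dist_eq_norm]
    exact hball s hs
  have hreal : ∀ t : ℝ, |t| < 2 → K (c t) = 0 := by
    intro t ht
    have e : c t = (α + (t : ℂ) • β, star (α + (t : ℂ) • β)) := by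
      simp [c, star_add, star_smul]
    rw [e]
    apply h0
    rw [mem_ball_iff_norm]
    exact (hball t (by simpa using ht)).1
  have hfreq : ∃ᶠ s in 𝓝[≠] (0 : ℂ), K (c s) = 0 := by
    have ht : Tendsto (fun t : ℝ => (t : ℂ)) (𝓝[≠] 0) (𝓝[≠] 0) := by
      refine tendsto_nhdsWithin_iff.2 ⟨?_, ?_⟩
      · have := (Complex.continuous_ofReal.tendsto (0:ℝ)).mono_left
          (nhdsWithin_le_nhds (s := {0}ᶜ))
        simpa using this
      · filter_upwards [self_mem_nhdsWithin] with t ht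
        simpa using ht
    have hev : ∀ᶠ t : ℝ in 𝓝[≠] 0, K (c t) = 0 := by
      refine nhdsWithin_le_nhds ?_
      filter_upwards [Metric.ball_mem_nhds (0:ℝ) (by norm_num : (0:ℝ) < 2)] with t ht
      exact hreal t (by simpa using ht)
    exact ht.frequently hev.frequently
  have := hφ.eqOn_zero_of_preconnected_of_frequently_eq_zero
    (convex_ball _ _).isPreconnected (Metric.mem_ball_self (by norm_num)) hfreq
    (show Complex.I ∈ Metric.ball (0:ℂ) 2 by simp)
  have e : c Complex.I = (z, w) := by
    refine Prod.ext ?_ ?_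
    · ext i
      simp only [c, hα, hβ, Pi.add_apply, Pi.smul_apply, Pi.sub_apply, smul_eq_mul]
      field_simp
      ring
    · ext i
      simp [c, hα, hβ]
      ring_nf
      simp
      ring
  rw [← e]; exact this

/-- The order of vanishing at `0` of a holomorphic function can be read on the diagonal: the
homogeneous terms of low degree vanish on the diagonal one after the other, hence identically. -/
theorem isBigO_of_real_points {n N : ℕ} {E : (Fin n → ℂ) × (Fin n → ℂ) → ℂ}
    (hE : AnalyticAt ℂ E 0)
    (h0 : (fun z : Fin n → ℂ => E (z, star z)) =O[𝓝 0] fun z => ‖z‖ ^ N) :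
    E =O[𝓝 0] fun q => ‖q‖ ^ N := by
  obtain ⟨p, hp⟩ := hE
  set J := diagL n
  have hJ : ∀ z, J z = (z, star z) := fun z => rfl
  have hJn : ∀ z, ‖J z‖ = ‖z‖ := by intro z; rw [hJ, Prod.norm_def]; simp
  have key : ∀ k < N, ∀ q, p k (fun _ => q) = 0 := by
    intro k
    induction k using Nat.strong_induction_on with
    | _ k ih =>
    intro hk
    have h1 := hp.isBigO_sub_partialSum_pow (k + 1)
    have hps : ∀ q, p.partialSum (k + 1) q = p k (fun _ => q) := by
      intro q
      rw [FormalMultilinearSeries.partialSum, Finset.sum_range_succ, Finset.sum_eq_zero, zero_add]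
      intro i hi
      exact ih i (Finset.mem_range.1 hi) ((Finset.mem_range.1 hi).trans hk) q
    simp only [zero_add, hps] at h1
    have hJt : Tendsto J (𝓝 0) (𝓝 0) := by
      simpa using J.continuous.tendsto 0
    have h2 := h1.comp_tendsto hJt
    have h3 : (fun z => E (J z)) =O[𝓝 0] fun z : Fin n → ℂ => ‖z‖ ^ (k + 1) := by
      refine h0.trans ?_
      refine Asymptotics.IsBigO.of_bound 1 ?_
      filter_upwards [Metric.ball_mem_nhds (0 : Fin n → ℂ) one_pos] with z hz
      rw [one_mul, Real.norm_of_nonneg (by positivity), Real.norm_of_nonneg (by positivity)]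
      exact pow_le_pow_of_le_one (norm_nonneg _) (mem_ball_zero_iff.1 hz).le hk
    have h4 : (fun z => p k (fun _ => J z)) =O[𝓝 0] fun z : Fin n → ℂ => ‖z‖ ^ (k + 1) := by
      have := h3.sub (h2.congr_right (by simp [hJn]))
      refine this.congr_left ?_
      intro z; simp
    let p' := ((p k).restrictScalars ℝ).compContinuousLinearMap (fun _ => J)
    have h5 : ∀ z, p k (fun _ => J z) = 0 := fun z =>
      Asymptotics.IsBigO.continuousMultilinearMap_apply_eq_zero (p := p') h4 z
    intro q
    have hd : DifferentiableOn ℂ (fun q => p k (fun _ => q))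
        (Metric.ball ((0 : Fin n → ℂ), star 0) (4 * (‖q‖ + 1))) := by
      have : Differentiable ℂ (fun q => p k (fun _ => q)) := by
        intro q
        exact ((p k).contDiff (n := 1)).differentiable (by norm_num) |>.comp
          (differentiable_pi.2 fun _ => differentiable_id) q
      exact this.differentiableOn
    refine eq_zero_of_real_points hd (fun z _ => h5 z) q ?_
    rw [mem_ball_iff_norm]
    simp only [star_zero, Prod.mk_zero_zero, sub_zero]
    linarith
  have h1 := hp.isBigO_sub_partialSum_pow N
  have hps : ∀ q, p.partialSum N q = 0 := by
    intro q
    rw [FormalMultilinearSeries.partialSum]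
    exact Finset.sum_eq_zero fun i hi => key i (Finset.mem_range.1 hi) q
  simpa [hps] using h1

/-- The conjugate `z ↦ conj (f (z̄))` of a holomorphic germ is holomorphic. -/
theorem analyticAt_star_star {n : ℕ} {f : (Fin n → ℂ) → ℂ} (hf : AnalyticAt ℂ f 0) :
    AnalyticAt ℂ (fun z => star (f (star z))) 0 := by
  obtain ⟨p, r, hp⟩ := hf
  let P : FormalMultilinearSeries ℂ (Fin n → ℂ) ℂ := fun k =>
    { toFun := fun m => star (p k (fun i => star (m i)))
      map_update_add' := by
        intro _ m i x y
        have h : ∀ x, (fun j => star (Function.update m i x j))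
            = Function.update (fun j => star (m j)) i (star x) := by
          intro x; ext j : 1
          rcases eq_or_ne j i with rfl | hj <;> simp [*]
        have inst : ‹DecidableEq (Fin k)› = (fun a b => instDecidableEqFin k a b) :=
          Subsingleton.elim _ _
        subst inst
        simp only [h, star_add]
        rw [(p k).map_update_add, star_add]
      map_update_smul' := by
        intro _ m i c x
        have h : ∀ x, (fun j => star (Function.update m i x j))
            = Function.update (fun j => star (m j)) i (star x) := by
          intro x; ext j : 1
          rcases eq_or_ne j i with rfl | hj <;> simp [*]
        have inst : ‹DecidableEq (Fin k)› = (fun a b => instDecidableEqFin k a b) :=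
          Subsingleton.elim _ _
        subst inst
        simp only [h, star_smul]
        rw [(p k).map_update_smul]
        simp
      cont := by
        apply continuous_star.comp
        apply (p k).cont.comp
        fun_prop }
  have hPapp : ∀ k m, P k m = star (p k (fun i => star (m i))) := fun _ _ => rfl
  refine ⟨P, r, ⟨?_, hp.r_pos, ?_⟩⟩
  · refine hp.r_le.trans ?_
    apply FormalMultilinearSeries.radius_le_of_le
    intro k
    refine ContinuousMultilinearMap.opNorm_le_bound (norm_nonneg _) fun m => ?_
    rw [hPapp, norm_star]
    refine ((p k).le_opNorm _).trans_eq ?_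
    simp only [norm_star]
  · intro y hy
    have hy' : star y ∈ Metric.eball (0 : Fin n → ℂ) r := by
      rw [Metric.mem_eball] at hy ⊢
      simpa [edist_zero_right, enorm_eq_nnnorm] using hy
    have h := hp.hasSum hy'
    have h2 := h.map (starL ℂ : ℂ ≃L⋆[ℂ] ℂ) (starL ℂ : ℂ ≃L⋆[ℂ] ℂ).continuous
    have e : star (f (star (0 + y))) = (starL ℂ : ℂ ≃L⋆[ℂ] ℂ) (f (0 + star y)) := by simp
    exact e ▸ h2

/-! ### Parameter integrals and the identity theorem -/

/-- Holomorphic dependence of a Cauchy integral on parameters. -/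
theorem differentiableAt_circleIntegral {V : Type*} [NormedAddCommGroup V] [NormedSpace ℂ V]
    [ProperSpace V] {f : V × ℂ → ℂ} {O : Set V} (hO : IsOpen O)
    (hf : ∀ q ∈ O, ∀ t ∈ Metric.sphere (0 : ℂ) 1, AnalyticAt ℂ f (q, t)) {q₀ : V} (hq : q₀ ∈ O) :
    DifferentiableAt ℂ (fun q => ∮ t in C(0, 1), f (q, t)) q₀ := by
  obtain ⟨ε, hε, hsub⟩ := Metric.nhds_basis_closedBall.mem_iff.1 (hO.mem_nhds hq)
  set Lf : V × ℂ → V →L[ℂ] ℂ := fun x => (fderiv ℂ f x).comp (ContinuousLinearMap.inl ℂ V ℂ)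
    with hLf
  have hLc : ∀ q ∈ O, ∀ t ∈ Metric.sphere (0 : ℂ) 1, ContinuousAt Lf (q, t) := by
    intro q hq t ht
    have := (hf q hq t ht).fderiv.continuousAt
    exact this.clm_comp continuousAt_const
  obtain ⟨C, hC⟩ := ((isCompact_closedBall q₀ ε).prod
    (isCompact_sphere (0 : ℂ) 1)).exists_bound_of_continuousOn (f := Lf) (by
      rintro ⟨q, t⟩ ⟨h1, h2⟩
      exact (hLc q (hsub h1) t h2).continuousWithinAt)
  have hcm : ∀ θ : ℝ, circleMap 0 1 θ ∈ Metric.sphere (0 : ℂ) 1 := fun θ =>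
    circleMap_mem_sphere 0 zero_le_one θ
  have hcmc : Continuous (circleMap (0:ℂ) 1) := continuous_circleMap 0 1
  have hdc : Continuous (deriv (circleMap (0:ℂ) 1)) := by
    have : deriv (circleMap (0:ℂ) 1) = fun θ => circleMap 0 1 θ * Complex.I := by
      ext θ; rw [deriv_circleMap]
    rw [this]; fun_prop
  have hFc : ∀ q ∈ O, Continuous fun θ => deriv (circleMap (0:ℂ) 1) θ • f (q, circleMap 0 1 θ) := by
    intro q hq
    refine hdc.smul (continuous_iff_continuousAt.2 fun θ => ?_)
    exact (hf q hq _ (hcm θ)).continuousAt.comp (f := fun θ => (q, circleMap (0:ℂ) 1 θ))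
      (by fun_prop)
  have hF'c : Continuous fun θ => deriv (circleMap (0:ℂ) 1) θ • Lf (q₀, circleMap 0 1 θ) := by
    refine hdc.smul (continuous_iff_continuousAt.2 fun θ => ?_)
    exact (hLc q₀ hq _ (hcm θ)).comp (f := fun θ => (q₀, circleMap (0:ℂ) 1 θ))
      (by fun_prop)
  have := intervalIntegral.hasFDerivAt_integral_of_dominated_of_fderiv_le (𝕜 := ℂ)
    (μ := MeasureTheory.volume) (a := 0) (b := 2 * Real.pi) (x₀ := q₀)
    (F := fun q θ => deriv (circleMap (0:ℂ) 1) θ • f (q, circleMap 0 1 θ))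
    (F' := fun q θ => deriv (circleMap (0:ℂ) 1) θ • Lf (q, circleMap 0 1 θ))
    (s := Metric.closedBall q₀ ε) (bound := fun _ => C) (Metric.closedBall_mem_nhds _ hε)
    (by
      filter_upwards [hO.mem_nhds hq] with q hq
      exact (hFc q hq).aestronglyMeasurable)
    ((hFc q₀ hq).intervalIntegrable _ _) hF'c.aestronglyMeasurable
    (by
      refine Eventually.of_forall fun θ _ q hq => ?_
      rw [norm_smul, deriv_circleMap]
      simpa using hC (q, circleMap 0 1 θ) ⟨hq, hcm θ⟩)
    (by simp)
    (by
      refine Eventually.of_forall fun θ _ q hq => ?_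
      have h1 := (hf q (hsub hq) _ (hcm θ)).differentiableAt.hasFDerivAt
      have h2 : HasFDerivAt (fun q : V => (q, circleMap (0:ℂ) 1 θ))
        (ContinuousLinearMap.inl ℂ V ℂ) q := hasFDerivAt_prodMk_left q _
      exact (h1.comp q h2).const_smul (deriv (circleMap (0:ℂ) 1) θ))
  exact this.differentiableAt

/-- Identity theorem on a convex open set, proved along complex lines through `o`. -/
theorem eq_zero_of_convex {V : Type*} [NormedAddCommGroup V] [NormedSpace ℂ V]
    {K : V → ℂ} {B : Set V} (hB : IsOpen B) (hBc : Convex ℝ B) (hK : DifferentiableOn ℂ K B)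
    {o : V} (ho : o ∈ B) (h0 : ∀ᶠ q in 𝓝 o, K q = 0) : ∀ q ∈ B, K q = 0 := by
  intro q hq
  let c : ℂ → V := fun s => o + s • (q - o)
  have hc : Differentiable ℂ c := by intro s; fun_prop
  have hconv : Convex ℝ (c ⁻¹' B) := by
    intro s hs t ht a b ha hb hab
    have e : c (a • s + b • t) = a • c s + b • c t := by
      have h1 : o = (a + b) • o := by rw [hab, one_smul]
      simp only [c]
      nth_rewrite 1 [h1]
      rw [smul_add, smul_add, add_smul a b, add_smul (a • s), smul_assoc, smul_assoc]
      abel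
    rw [Set.mem_preimage, e]
    exact hBc hs ht ha hb hab
  have hφ : AnalyticOnNhd ℂ (fun s => K (c s)) (c ⁻¹' B) := by
    apply DifferentiableOn.analyticOnNhd _ (hB.preimage hc.continuous)
    exact hK.comp hc.differentiableOn fun s hs => hs
  have c0 : c 0 = o := by simp [c]
  have c1 : c 1 = q := by simp [c]
  have hz : (fun s => K (c s)) =ᶠ[𝓝 0] 0 := by
    have := hc.continuous.tendsto 0
    rw [c0] at this
    exact this.eventually h0
  have := hφ.eqOn_zero_of_preconnected_of_eventuallyEq_zero hconv.isPreconnected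
    (show (0:ℂ) ∈ c ⁻¹' B by rw [Set.mem_preimage, c0]; exact ho) hz
    (show (1:ℂ) ∈ c ⁻¹' B by rw [Set.mem_preimage, c1]; exact hq)
  simpa [c1] using this

/-! ### Small perturbations of the monomial model -/

/-- The complexified model `z₁⋯zₙ + w₁⋯wₙ` of `2 Re (z₁⋯zₙ)`. -/
noncomputable def mon {n : ℕ} (q : (Fin n → ℂ) × (Fin n → ℂ)) : ℂ := ∏ i, q.1 i + ∏ i, q.2 i

/-- The product of all coordinates but the one of index `e`. -/
noncomputable def pe {n : ℕ} (e : Fin n) (w : Fin n → ℂ) : ℂ := ∏ i ∈ Finset.univ.erase e, w i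

/-- Radius of the disc of the distinguished variable. -/
noncomputable def radT (n : ℕ) : ℝ := 3 * 32 ^ n

/-- Radius of the ball on which the rescaled complexification is controlled. -/
noncomputable def radL (n : ℕ) : ℝ := 32 ^ n * radT n + 2

/-- Size of the perturbation of the model `mon`. -/
noncomputable def rho (n : ℕ) : ℝ := (1 / 100) ^ n

/-- `G` is a small holomorphic perturbation of the model `mon` on the ball of radius `radL n`. -/
structure NearMon {n : ℕ} (G : (Fin n → ℂ) × (Fin n → ℂ) → ℂ) : Prop where
  an : AnalyticOnNhd ℂ G (Metric.closedBall 0 (radL n))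
  near : ∀ q ∈ Metric.closedBall 0 (radL n), ‖G q - mon q‖ ≤ rho n

theorem one_le_pow32 (n : ℕ) : (1 : ℝ) ≤ 32 ^ n := one_le_pow₀ (by norm_num)

theorem rho_pos (n : ℕ) : 0 < rho n := by unfold rho; positivity

theorem rho_mul_pow (n : ℕ) (hn : 2 ≤ n) {c : ℝ} (hc : 0 ≤ c) (hc' : c ≤ 100) :
    rho n * c ^ n ≤ (c / 100) ^ 2 := by
  rw [rho, ← mul_pow]
  have : (1 / 100 * c) ^ n ≤ (1 / 100 * c) ^ 2 :=
    pow_le_pow_of_le_one (by positivity) (by linarith) hn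
  calc _ ≤ _ := this
    _ = _ := by ring

theorem rho_le (n : ℕ) (hn : 2 ≤ n) : rho n ≤ 1 / 10000 := by
  have := rho_mul_pow n hn (c := 1) (by norm_num) (by norm_num)
  norm_num at this ⊢; linarith

theorem prod_eq_pe {n : ℕ} (e : Fin n) (z : Fin n → ℂ) : ∏ i, z i = z e * pe e z :=
  (Finset.mul_prod_erase _ _ (Finset.mem_univ e)).symm

theorem pe_update {n : ℕ} (e : Fin n) (z : Fin n → ℂ) (s : ℂ) :
    pe e (Function.update z e s) = pe e z := by
  refine Finset.prod_congr rfl fun i hi => ?_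
  rw [Function.update_of_ne (Finset.ne_of_mem_erase hi)]

theorem prod_update {n : ℕ} (e : Fin n) (z : Fin n → ℂ) (s : ℂ) :
    ∏ i, Function.update z e s i = s * pe e z := by
  rw [prod_eq_pe e, pe_update, Function.update_self]

theorem le_norm_pe {n : ℕ} {e : Fin n} {w : Fin n → ℂ} {c : ℝ} (hc : 0 ≤ c) (hc1 : c ≤ 1)
    (h : ∀ i, i ≠ e → c ≤ ‖w i‖) : c ^ n ≤ ‖pe e w‖ := by
  rw [pe, norm_prod]
  calc c ^ n ≤ c ^ (Finset.univ.erase e).card :=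
        pow_le_pow_of_le_one hc hc1 ((Finset.card_le_univ _).trans (by simp))
    _ = ∏ i ∈ Finset.univ.erase e, c := by rw [Finset.prod_const]
    _ ≤ _ := Finset.prod_le_prod (fun _ _ => hc) fun i hi => h i (Finset.ne_of_mem_erase hi)

theorem norm_pe_le {n : ℕ} {e : Fin n} {w : Fin n → ℂ} {c : ℝ} (hc1 : 1 ≤ c)
    (h : ∀ i, i ≠ e → ‖w i‖ ≤ c) : ‖pe e w‖ ≤ c ^ n := by
  rw [pe, norm_prod]
  calc _ ≤ ∏ i ∈ Finset.univ.erase e, c :=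
        Finset.prod_le_prod (fun _ _ => norm_nonneg _) fun i hi => h i (Finset.ne_of_mem_erase hi)
    _ = c ^ (Finset.univ.erase e).card := by rw [Finset.prod_const]
    _ ≤ _ := pow_le_pow_right₀ hc1 ((Finset.card_le_univ _).trans (by simp))

theorem analyticAt_mon {n : ℕ} (q : (Fin n → ℂ) × (Fin n → ℂ)) : AnalyticAt ℂ mon q := by
  unfold mon
  refine AnalyticAt.add ?_ ?_
  · refine Finset.analyticAt_fun_prod _ fun i _ => ?_
    exact ((ContinuousLinearMap.proj (R := ℂ) (φ := fun _ : Fin n => ℂ) i).comp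
      (ContinuousLinearMap.fst ℂ _ _)).analyticAt q
  · refine Finset.analyticAt_fun_prod _ fun i _ => ?_
    exact ((ContinuousLinearMap.proj (R := ℂ) (φ := fun _ : Fin n => ℂ) i).comp
      (ContinuousLinearMap.snd ℂ _ _)).analyticAt q

/-- `Function.update` at the index `e`, as a continuous linear map. -/
noncomputable def updL {n : ℕ} (e : Fin n) : (Fin n → ℂ) × ℂ →L[ℂ] (Fin n → ℂ) :=
  ContinuousLinearMap.fst ℂ _ _ +
    (ContinuousLinearMap.snd ℂ _ _ - (ContinuousLinearMap.proj (R := ℂ) (φ := fun _ : Fin n => ℂ) e).comp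
      (ContinuousLinearMap.fst ℂ _ _)).smulRight (Pi.single e 1)

theorem updL_apply {n : ℕ} (e : Fin n) (w : Fin n → ℂ) (s : ℂ) :
    updL e (w, s) = Function.update w e s := by
  ext i
  rcases eq_or_ne i e with rfl | h <;> simp [updL, *]

theorem NearMon.swap {n : ℕ} {G : (Fin n → ℂ) × (Fin n → ℂ) → ℂ} (hG : NearMon G) :
    NearMon (fun q => G q.swap) := by
  have hs : ∀ q ∈ Metric.closedBall (0 : (Fin n → ℂ) × (Fin n → ℂ)) (radL n),
      q.swap ∈ Metric.closedBall (0 : (Fin n → ℂ) × (Fin n → ℂ)) (radL n) := by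
    intro q hq
    rw [mem_closedBall_zero_iff, Prod.norm_def] at *
    rwa [Prod.fst_swap, Prod.snd_swap, max_comm]
  refine ⟨fun q hq => ?_, fun q hq => ?_⟩
  · have h2 : AnalyticAt ℂ (fun q : (Fin n → ℂ) × (Fin n → ℂ) => q.swap) q :=
      analyticAt_snd.prod analyticAt_fst
    exact (hG.an _ (hs q hq)).fun_comp h2
  · have := hG.near _ (hs q hq)
    simpa [mon, add_comm] using this

/-- Cauchy estimate for the first derivative of a perturbation of `mon`. -/
theorem NearMon.fderiv_near {n : ℕ} {G : (Fin n → ℂ) × (Fin n → ℂ) → ℂ} (hG : NearMon G)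
    {q : (Fin n → ℂ) × (Fin n → ℂ)} (hq : ‖q‖ ≤ radL n - 1)
    {v : (Fin n → ℂ) × (Fin n → ℂ)} (hv : ‖v‖ ≤ 1) :
    ‖fderiv ℂ G q v - fderiv ℂ mon q v‖ ≤ rho n := by
  have hin : ∀ t : ℂ, ‖t‖ ≤ 1 → q + t • v ∈ Metric.closedBall 0 (radL n) := by
    intro t ht
    rw [mem_closedBall_zero_iff]
    refine (norm_add_le _ _).trans ?_
    rw [norm_smul]
    have := mul_le_mul ht hv (norm_nonneg _) zero_le_one
    linarith
  have hc : ∀ t, HasDerivAt (fun t : ℂ => q + t • v) v t := by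
    intro t
    have := ((hasDerivAt_id t).smul_const v).const_add q
    simpa using this
  have hd : ∀ t : ℂ, ‖t‖ ≤ 1 → HasDerivAt (fun t => G (q + t • v) - mon (q + t • v))
      (fderiv ℂ G (q + t • v) v - fderiv ℂ mon (q + t • v) v) t := by
    intro t ht
    exact ((hG.an _ (hin t ht)).differentiableAt.hasFDerivAt.comp_hasDerivAt t (hc t)).sub
      ((analyticAt_mon _).differentiableAt.hasFDerivAt.comp_hasDerivAt t (hc t))
  have h1 := Complex.norm_deriv_le_of_forall_mem_sphere_norm_le (c := 0) (R := 1) (C := rho n)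
    (f := fun t => G (q + t • v) - mon (q + t • v)) one_pos
    (DifferentiableOn.diffContOnCl (fun t ht => by
      rw [closure_ball _ one_ne_zero, mem_closedBall_zero_iff] at ht
      exact (hd t ht).differentiableAt.differentiableWithinAt))
    (fun t ht => hG.near _ (hin t (mem_sphere_zero_iff_norm.1 ht).le))
  have h2 := (hd 0 (by simp)).deriv
  rw [h2] at h1
  simpa using h1

theorem fderiv_mon_snd {n : ℕ} (e : Fin n) (q : (Fin n → ℂ) × (Fin n → ℂ)) :
    fderiv ℂ mon q (0, Pi.single e 1) = pe e q.2 := by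
  have hc : HasDerivAt (fun t : ℂ => q + t • ((0, Pi.single e 1) : (Fin n → ℂ) × (Fin n → ℂ)))
      (0, Pi.single e 1) 0 := by
    simpa using ((hasDerivAt_id (0:ℂ)).smul_const
      ((0, Pi.single e 1) : (Fin n → ℂ) × (Fin n → ℂ))).const_add q
  have h1 := HasFDerivAt.comp_hasDerivAt (0:ℂ) (l := mon) (l' := fderiv ℂ mon q) (by
    simpa using (analyticAt_mon q).differentiableAt.hasFDerivAt) hc
  have h2 : (mon ∘ fun t : ℂ => q + t • ((0, Pi.single e 1) : (Fin n → ℂ) × (Fin n → ℂ)))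
      = fun t => ∏ i, q.1 i + (q.2 e + t) * pe e q.2 := by
    ext t
    simp only [Function.comp, mon]
    have e1 : (q + t • ((0, Pi.single e 1) : (Fin n → ℂ) × (Fin n → ℂ))).2
        = Function.update q.2 e (q.2 e + t) := by
      ext i; rcases eq_or_ne i e with rfl | h <;> simp [*]
    rw [e1, prod_update]; simp
  rw [h2] at h1
  have h3 : HasDerivAt (fun t => ∏ i, q.1 i + (q.2 e + t) * pe e q.2) (pe e q.2) 0 := by
    simpa using (((hasDerivAt_id (0:ℂ)).const_add (q.2 e)).mul_const (pe e q.2)).const_add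
      (∏ i, q.1 i)
  exact h1.unique h3

theorem norm_prod_mk_le {n : ℕ} {z w : Fin n → ℂ} {R : ℝ} (hR : 0 ≤ R) (hz : ∀ i, ‖z i‖ ≤ R)
    (hw : ∀ i, ‖w i‖ ≤ R) : ‖(z, w)‖ ≤ R := by
  rw [Prod.norm_def]
  exact max_le ((pi_norm_le_iff_of_nonneg hR).2 hz) ((pi_norm_le_iff_of_nonneg hR).2 hw)

theorem norm_single_pair_le {n : ℕ} (e : Fin n) :
    ‖((0, Pi.single e 1) : (Fin n → ℂ) × (Fin n → ℂ))‖ ≤ 1 := by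
  refine norm_prod_mk_le zero_le_one (by simp) fun i => ?_
  rcases eq_or_ne i e with rfl | h <;> simp [*]

/-! ### Solving `G = 0` for one coordinate -/

/-- Points all of whose coordinates of index `≠ e` have modulus `< 2`, the one of index `e`
having modulus `< X`. -/
def slab {n : ℕ} (e : Fin n) (X : ℝ) : Set (Fin n → ℂ) :=
  {z | (∀ i, i ≠ e → ‖z i‖ < 2) ∧ ‖z e‖ < X}

/-- Points whose coordinates of index `≠ e` lie in the annulus `1/8 < |x| < 2`. -/
def annu {n : ℕ} (e : Fin n) : Set (Fin n → ℂ) :=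
  {w | ∀ i, i ≠ e → 1 / 8 < ‖w i‖ ∧ ‖w i‖ < 2}

theorem isOpen_forall_ne {n : ℕ} (e : Fin n) {u : Set ℂ} (hu : IsOpen u) :
    IsOpen {z : Fin n → ℂ | ∀ i, i ≠ e → z i ∈ u} := by
  have h : {z : Fin n → ℂ | ∀ i, i ≠ e → z i ∈ u}
      = Set.pi {i | i ≠ e} (fun _ => u) := by ext z; simp [Set.mem_pi]
  rw [h]
  exact isOpen_set_pi (Set.toFinite _) fun _ _ => hu

theorem isOpen_ann : IsOpen {x : ℂ | 1 / 8 < ‖x‖ ∧ ‖x‖ < 2} :=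
  (isOpen_lt continuous_const continuous_norm).inter (isOpen_lt continuous_norm continuous_const)

theorem isOpen_slab {n : ℕ} (e : Fin n) (X : ℝ) : IsOpen (slab e X) :=
  (isOpen_forall_ne e (u := {x : ℂ | ‖x‖ < 2}) (isOpen_lt continuous_norm continuous_const)).inter
    (isOpen_lt (continuous_apply e).norm continuous_const)

theorem isOpen_annu {n : ℕ} (e : Fin n) : IsOpen (annu e) :=
  isOpen_forall_ne e isOpen_ann

theorem norm_pair_update_le {n : ℕ} {e : Fin n} {X : ℝ} (hX1 : 1 ≤ X) (hXT : X ≤ radT n)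
    {z w : Fin n → ℂ} (hz : z ∈ slab e X) (hw : w ∈ annu e) {s : ℂ} (hs : ‖s‖ ≤ 32 ^ n * X) :
    ‖(z, Function.update w e s)‖ ≤ radL n - 1 := by
  have h32 := one_le_pow32 n
  have hT : 3 ≤ radT n := by unfold radT; linarith
  have hL : radT n ≤ 32 ^ n * radT n := by nlinarith
  have hL2 : 32 ^ n * X ≤ 32 ^ n * radT n := by gcongr
  have hL3 : radL n - 1 = 32 ^ n * radT n + 1 := by unfold radL; ring
  rw [hL3]
  refine norm_prod_mk_le (by linarith) (fun i => ?_) fun i => ?_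
  · rcases eq_or_ne i e with rfl | h
    · linarith [hz.2]
    · linarith [hz.1 i h]
  · rcases eq_or_ne i e with rfl | h
    · rw [Function.update_self]; linarith
    · rw [Function.update_of_ne h]; linarith [(hw i h).2]

theorem pow_eighth_le_pe {n : ℕ} {e : Fin n} {w : Fin n → ℂ} (hw : w ∈ annu e) :
    1 ≤ ‖pe e w‖ * 8 ^ n := by
  have := le_norm_pe (e := e) (w := w) (c := 1 / 8) (by norm_num) (by norm_num)
    fun i hi => (hw i hi).1.le
  have h2 : (1 / 8 : ℝ) ^ n * 8 ^ n = 1 := by rw [← mul_pow]; norm_num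
  rw [← h2]; gcongr

/-- The model has `e`-th partial derivative `pe e w`, which on `annu e` dominates the perturbation. -/
theorem rho_lt_pe {n : ℕ} (hn : 2 ≤ n) {e : Fin n} {w : Fin n → ℂ} (hw : w ∈ annu e) :
    rho n ≤ ‖pe e w‖ / 2 ∧ 0 < ‖pe e w‖ := by
  have h1 := pow_eighth_le_pe hw
  have h2 := rho_mul_pow n hn (c := 8) (by norm_num) (by norm_num)
  have h8 : (0 : ℝ) < 8 ^ n := by positivity
  have h3 : rho n * 8 ^ n ≤ (‖pe e w‖ / 2) * 8 ^ n := by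
    norm_num at h2; linarith
  exact ⟨le_of_mul_le_mul_right h3 h8, by
    by_contra h
    have : ‖pe e w‖ = 0 := le_antisymm (not_lt.1 h) (norm_nonneg _)
    rw [this] at h1; linarith⟩

theorem hasDerivAt_slice {n : ℕ} {G : (Fin n → ℂ) × (Fin n → ℂ) → ℂ} {e : Fin n}
    {z w : Fin n → ℂ} {s : ℂ} (h : AnalyticAt ℂ G (z, Function.update w e s)) :
    HasDerivAt (fun s => G (z, Function.update w e s))
      (fderiv ℂ G (z, Function.update w e s) (0, Pi.single e 1)) s := by
  have h1 : HasDerivAt (fun s => (z, Function.update w e s)) (0, Pi.single e 1) s :=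
    (hasDerivAt_const s z).prodMk (hasDerivAt_update w e s)
  exact h.differentiableAt.hasFDerivAt.comp_hasDerivAt s h1

theorem NearMon.mem {n : ℕ} {q : (Fin n → ℂ) × (Fin n → ℂ)} (hq : ‖q‖ ≤ radL n - 1) :
    q ∈ Metric.closedBall (0 : (Fin n → ℂ) × (Fin n → ℂ)) (radL n) := by
  rw [mem_closedBall_zero_iff]; linarith

/-- Over `annu e` the zero set of `G` is transversal to the `e`-th axis of the second variable. -/
theorem NearMon.dw_ne {n : ℕ} (hn : 2 ≤ n) {G : (Fin n → ℂ) × (Fin n → ℂ) → ℂ} (hG : NearMon G)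
    {e : Fin n} {q : (Fin n → ℂ) × (Fin n → ℂ)} (hq : ‖q‖ ≤ radL n - 1) (hw : q.2 ∈ annu e) :
    fderiv ℂ G q (0, Pi.single e 1) ≠ 0 := by
  intro h0
  have := hG.fderiv_near hq (norm_single_pair_le e)
  rw [h0, fderiv_mon_snd, zero_sub, norm_neg] at this
  have := rho_lt_pe hn hw
  linarith [this.1, this.2]

/-- Newton-type map whose fixed points are the zeros of `s ↦ G (z, w with w_e = s)`. -/
noncomputable def newton {n : ℕ} (G : (Fin n → ℂ) × (Fin n → ℂ) → ℂ) (e : Fin n)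
    (z w : Fin n → ℂ) (s : ℂ) : ℂ := s - G (z, Function.update w e s) / pe e w

/-- `newton` maps the closed disc of radius `32 ^ n * X` into its interior. -/
theorem newton_norm_lt {n : ℕ} (hn : 2 ≤ n) {G : (Fin n → ℂ) × (Fin n → ℂ) → ℂ} (hG : NearMon G)
    {e : Fin n} {X : ℝ} (hX1 : 1 ≤ X) (hXT : X ≤ radT n)
    {z w : Fin n → ℂ} (hz : z ∈ slab e X) (hw : w ∈ annu e) {s : ℂ} (hs : ‖s‖ ≤ 32 ^ n * X) :
    ‖newton G e z w s‖ < 32 ^ n * X := by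
  have hp := rho_lt_pe hn hw
  have hp0 : pe e w ≠ 0 := norm_pos_iff.1 hp.2
  have hnear := hG.near _ (NearMon.mem (norm_pair_update_le hX1 hXT hz hw hs))
  have e1 : newton G e z w s = -(z e * pe e z +
      (G (z, Function.update w e s) - mon (z, Function.update w e s))) / pe e w := by
    simp only [newton, mon, prod_update]
    rw [prod_eq_pe e z]
    field_simp
    ring
  rw [e1, norm_div, norm_neg, div_lt_iff₀ hp.2]
  have hz2 : ‖pe e z‖ ≤ 2 ^ n := norm_pe_le (by norm_num) fun i hi => (hz.1 i hi).le
  have h1 : ‖z e * pe e z + (G (z, Function.update w e s) - mon (z, Function.update w e s))‖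
      ≤ X * 2 ^ n + rho n := by
    refine (norm_add_le _ _).trans (add_le_add ?_ hnear)
    rw [norm_mul]; exact mul_le_mul hz.2.le hz2 (norm_nonneg _) (by linarith)
  refine h1.trans_lt ?_
  have h8 := pow_eighth_le_pe hw
  have h3 : (2:ℝ) * 2 ^ n ≤ 4 ^ n := by
    have : (4:ℝ) ^ n = 2 ^ n * 2 ^ n := by rw [← mul_pow]; norm_num
    rw [this]
    have : (2:ℝ) ^ 1 ≤ 2 ^ n := pow_le_pow_right₀ (by norm_num) (by omega)
    nlinarith
  have h32 : (32:ℝ) ^ n = 4 ^ n * 8 ^ n := by rw [← mul_pow]; norm_num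
  have h4 : (4:ℝ) ^ n * X ≤ 32 ^ n * X * ‖pe e w‖ := by
    rw [h32]
    have : 0 ≤ (4:ℝ) ^ n * X := by positivity
    nlinarith
  have h5 := rho_le n hn
  have h6 : (1:ℝ) ≤ 2 ^ n := one_le_pow₀ (by norm_num)
  nlinarith

theorem newton_lipschitz {n : ℕ} (hn : 2 ≤ n) {G : (Fin n → ℂ) × (Fin n → ℂ) → ℂ}
    (hG : NearMon G) {e : Fin n} {X : ℝ} (hX1 : 1 ≤ X) (hXT : X ≤ radT n)
    {z w : Fin n → ℂ} (hz : z ∈ slab e X) (hw : w ∈ annu e) {s t : ℂ} (hs : ‖s‖ ≤ 32 ^ n * X)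
    (ht : ‖t‖ ≤ 32 ^ n * X) :
    ‖newton G e z w s - newton G e z w t‖ ≤ 1 / 2 * ‖s - t‖ := by
  have hp := rho_lt_pe hn hw
  have hp0 : pe e w ≠ 0 := norm_pos_iff.1 hp.2
  have hd : ∀ s ∈ Metric.closedBall (0:ℂ) (32 ^ n * X), HasDerivAt (newton G e z w)
      (1 - fderiv ℂ G (z, Function.update w e s) (0, Pi.single e 1) / pe e w) s := by
    intro s hs
    rw [mem_closedBall_zero_iff] at hs
    have h1 := hasDerivAt_slice (hG.an _ (NearMon.mem (norm_pair_update_le hX1 hXT hz hw hs)))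
    exact (hasDerivAt_id s).sub (h1.div_const _)
  refine Convex.norm_image_sub_le_of_norm_hasDerivWithin_le
    (fun x hx => (hd x hx).hasDerivWithinAt) (fun x hx => ?_) (convex_closedBall 0 (32 ^ n * X))
    (by simpa using ht) (by simpa using hs)
  rw [mem_closedBall_zero_iff] at hx
  have h1 := hG.fderiv_near (norm_pair_update_le hX1 hXT hz hw hx) (norm_single_pair_le e)
  rw [fderiv_mon_snd] at h1
  simp only [pe_update] at h1
  have e1 : (1 - fderiv ℂ G (z, Function.update w e x) (0, Pi.single e 1) / pe e w)
    = -(fderiv ℂ G (z, Function.update w e x) (0, Pi.single e 1) - pe e w) / pe e w := by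
    field_simp
    ring
  rw [e1, norm_div, norm_neg, div_le_iff₀ hp.2]
  linarith [hp.1]

theorem newton_fixed_iff {n : ℕ} (hn : 2 ≤ n) {G : (Fin n → ℂ) × (Fin n → ℂ) → ℂ} {e : Fin n}
    {z w : Fin n → ℂ} (hw : w ∈ annu e) (s : ℂ) :
    newton G e z w s = s ↔ G (z, Function.update w e s) = 0 := by
  have hp0 : pe e w ≠ 0 := norm_pos_iff.1 (rho_lt_pe hn hw).2
  rw [newton, sub_eq_self, div_eq_zero_iff]
  simp [hp0]

/-- Over `slab e X × annu e` the equation `G = 0` is solved for the `e`-th coordinate of the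
second variable by a unique holomorphic function. -/
theorem exists_solution {n : ℕ} (hn : 2 ≤ n) {G : (Fin n → ℂ) × (Fin n → ℂ) → ℂ}
    (hG : NearMon G) (e : Fin n) {X : ℝ} (hX1 : 1 ≤ X) (hXT : X ≤ radT n) :
    ∃ γ : (Fin n → ℂ) × (Fin n → ℂ) → ℂ, ∀ z ∈ slab e X, ∀ w ∈ annu e,
      ‖γ (z, w)‖ < 32 ^ n * X ∧ AnalyticAt ℂ γ (z, w) ∧
      ∀ s : ℂ, ‖s‖ ≤ 32 ^ n * X → (G (z, Function.update w e s) = 0 ↔ s = γ (z, w)) := by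
  have hY : 0 ≤ 32 ^ n * X := by positivity
  have hex : ∀ z ∈ slab e X, ∀ w ∈ annu e, ∃ s : ℂ, ‖s‖ < 32 ^ n * X ∧
      G (z, Function.update w e s) = 0 := by
    intro z hz w hw
    have hmaps : Set.MapsTo (newton G e z w) (Metric.closedBall 0 (32 ^ n * X))
        (Metric.closedBall 0 (32 ^ n * X)) := by
      intro s hs
      rw [mem_closedBall_zero_iff] at *
      exact (newton_norm_lt hn hG hX1 hXT hz hw hs).le
    have hcon : ContractingWith (1 / 2) (hmaps.restrict (newton G e z w) _ _) := by
      refine ⟨by norm_num [← NNReal.coe_lt_coe], LipschitzWith.of_dist_le_mul ?_⟩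
      rintro ⟨s, hs⟩ ⟨t, ht⟩
      rw [mem_closedBall_zero_iff] at hs ht
      rw [Subtype.dist_eq, Subtype.dist_eq, dist_eq_norm, dist_eq_norm]
      simpa using newton_lipschitz hn hG hX1 hXT hz hw hs ht
    obtain ⟨y, hy, hfix, -⟩ := hcon.exists_fixedPoint' (Metric.isClosed_closedBall.isComplete)
      hmaps (x := 0) (by simpa using hY) (edist_ne_top _ _)
    rw [mem_closedBall_zero_iff] at hy
    refine ⟨y, ?_, (newton_fixed_iff hn hw y).1 hfix⟩
    have := newton_norm_lt hn hG hX1 hXT hz hw hy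
    rwa [hfix.eq] at this
  classical
  let γ : (Fin n → ℂ) × (Fin n → ℂ) → ℂ := fun q =>
    if h : ∃ s : ℂ, ‖s‖ < 32 ^ n * X ∧ G (q.1, Function.update q.2 e s) = 0 then h.choose else 0
  have hγ : ∀ z ∈ slab e X, ∀ w ∈ annu e, ‖γ (z, w)‖ < 32 ^ n * X ∧
      G (z, Function.update w e (γ (z, w))) = 0 := by
    intro z hz w hw
    have h := hex z hz w hw
    simp only [γ, dif_pos h]
    exact h.choose_spec
  have huniq : ∀ z ∈ slab e X, ∀ w ∈ annu e, ∀ s : ℂ, ‖s‖ ≤ 32 ^ n * X →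
      (G (z, Function.update w e s) = 0 ↔ s = γ (z, w)) := by
    intro z hz w hw s hs
    obtain ⟨h1, h2⟩ := hγ z hz w hw
    refine ⟨fun h => ?_, fun h => h ▸ h2⟩
    have h3 := newton_lipschitz hn hG hX1 hXT hz hw hs h1.le
    rw [(newton_fixed_iff hn hw s).2 h, (newton_fixed_iff hn hw _).2 h2] at h3
    have h4 : ‖s - γ (z, w)‖ = 0 := by
      have := norm_nonneg (s - γ (z, w)); linarith
    exact sub_eq_zero.1 (norm_eq_zero.1 h4)
  refine ⟨γ, fun z hz w hw => ⟨(hγ z hz w hw).1, ?_, huniq z hz w hw⟩⟩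
  obtain ⟨hlt, hzero⟩ := hγ z hz w hw
  set s₀ := γ (z, w) with hs₀
  let g : ((Fin n → ℂ) × (Fin n → ℂ)) × ℂ → ℂ := fun x => G (x.1.1, Function.update x.1.2 e x.2)
  have hin := norm_pair_update_le hX1 hXT hz hw hlt.le
  have hGan := hG.an _ (NearMon.mem hin)
  have hg : AnalyticAt ℂ g ((z, w), s₀) := by
    have h1 : AnalyticAt ℂ (fun x : ((Fin n → ℂ) × (Fin n → ℂ)) × ℂ =>
        (x.1.1, updL e (x.1.2, x.2))) ((z, w), s₀) := by
      refine AnalyticAt.prod (analyticAt_fst.comp analyticAt_fst) ?_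
      exact ((updL e).analyticAt _).fun_comp ((analyticAt_snd.comp analyticAt_fst).prod analyticAt_snd)
    simp only [updL_apply] at h1
    exact AnalyticAt.fun_comp (f := fun x : ((Fin n → ℂ) × (Fin n → ℂ)) × ℂ =>
      (x.1.1, Function.update x.1.2 e x.2)) hGan h1
  have hcd : ContDiffAt ℂ ⊤ g ((z, w), s₀) := hg.contDiffAt
  have hder : (fderiv ℂ g ((z, w), s₀)) (0, 1)
      = fderiv ℂ G (z, Function.update w e s₀) (0, Pi.single e 1) := by
    have h1 : HasDerivAt (fun s : ℂ => ((z, w), s)) ((0 : (Fin n → ℂ) × (Fin n → ℂ)), (1 : ℂ)) s₀ :=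
      (hasDerivAt_const s₀ (z, w)).prodMk (hasDerivAt_id s₀)
    have h2 := hg.differentiableAt.hasFDerivAt.comp_hasDerivAt s₀ h1
    exact h2.unique (hasDerivAt_slice hGan)
  have hne : (fderiv ℂ g ((z, w), s₀)) (0, 1) ≠ 0 := by
    rw [hder]
    refine hG.dw_ne hn hin fun i hi => ?_
    simp only [Function.update_of_ne hi]; exact hw i hi
  have hinv : (fderiv ℂ g ((z, w), s₀) ∘L
      ContinuousLinearMap.inr ℂ ((Fin n → ℂ) × (Fin n → ℂ)) ℂ).IsInvertible := by
    refine ⟨ContinuousLinearEquiv.unitsEquivAut ℂ (Units.mk0 _ hne), ?_⟩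
    ext
    simp
  have hψ := hcd.contDiffAt_implicitFunction (by simp) hinv
  set ψ := hcd.implicitFunction (by simp) hinv
  have hψ0 : ψ (z, w) = s₀ := hcd.implicitFunction_apply_self (by simp) hinv
  have hψe : ∀ᶠ x in 𝓝 (z, w), g (x, ψ x) = g ((z, w), s₀) :=
    hcd.eventually_apply_implicitFunction (by simp) hinv
  have hψan : AnalyticAt ℂ ψ (z, w) := hψ.analyticAt
  refine hψan.congr ?_
  have hn1 : ∀ᶠ x in 𝓝 (z, w), ‖ψ x‖ < 32 ^ n * X := by
    refine hψan.continuousAt.norm.eventually_lt_const ?_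
    simpa only [hψ0] using hlt
  have hn2 : ∀ᶠ x in 𝓝 (z, w), x ∈ slab e X ×ˢ annu e :=
    ((isOpen_slab e X).prod (isOpen_annu e)).mem_nhds ⟨hz, hw⟩
  filter_upwards [hψe, hn1, hn2] with x h1 h2 h3
  refine (huniq x.1 h3.1 x.2 h3.2 _ h2.le).1 ?_
  exact h1.trans hzero

/-! ### Propagation of the Levi condition -/

theorem analyticAt_clm_apply {E F G : Type*} [NormedAddCommGroup E] [NormedSpace ℂ E]
    [NormedAddCommGroup F] [NormedSpace ℂ F] [NormedAddCommGroup G] [NormedSpace ℂ G]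
    {f : E → F →L[ℂ] G} {g : E → F} {x : E} (hf : AnalyticAt ℂ f x) (hg : AnalyticAt ℂ g x) :
    AnalyticAt ℂ (fun y => f y (g y)) x := by
  have h1 := (ContinuousLinearMap.id ℂ (F →L[ℂ] G)).analyticAt_bilinear (f x, g x)
  exact AnalyticAt.fun_comp (f := fun y => (f y, g y)) h1 (hf.prod hg)

/-- `annu e` with the `e`-th coordinate bounded by `radT n`. -/
def boxA {n : ℕ} (e : Fin n) : Set (Fin n → ℂ) := {z | z ∈ annu e ∧ ‖z e‖ < radT n}

theorem isOpen_boxA {n : ℕ} (e : Fin n) : IsOpen (boxA e) :=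
  (isOpen_annu e).inter (isOpen_lt (continuous_apply e).norm continuous_const)

theorem boxA_subset_slab {n : ℕ} {e : Fin n} {z : Fin n → ℂ} (hz : z ∈ boxA e) :
    z ∈ slab e (radT n) := ⟨fun i hi => (hz.1 i hi).2, hz.2⟩

theorem isPreconnected_ann : IsPreconnected {x : ℂ | 1 / 8 < ‖x‖ ∧ ‖x‖ < 2} := by
  have h : {x : ℂ | 1 / 8 < ‖x‖ ∧ ‖x‖ < 2}
      = Complex.exp '' (Complex.reLm ⁻¹' Set.Ioo (Real.log (1 / 8)) (Real.log 2)) := by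
    ext x
    constructor
    · rintro ⟨h1, h2⟩
      have h0 : 0 < ‖x‖ := by linarith
      refine ⟨Complex.log x, ⟨?_, ?_⟩, Complex.exp_log (norm_pos_iff.1 h0)⟩
      · simpa [Complex.log_re] using Real.log_lt_log (by norm_num) h1
      · simpa [Complex.log_re] using Real.log_lt_log h0 h2
    · rintro ⟨y, ⟨h1, h2⟩, rfl⟩
      rw [Set.mem_ofPred_eq, Complex.norm_exp]
      exact ⟨(Real.log_lt_iff_lt_exp (by norm_num)).1 h1,
        (Real.lt_log_iff_exp_lt (by norm_num)).1 h2⟩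
  rw [h]
  refine IsPreconnected.image ?_ _ Complex.continuous_exp.continuousOn
  exact ((convex_Ioo _ _).linear_preimage Complex.reLm).isPreconnected

theorem isPreconnected_boxA {n : ℕ} (e : Fin n) : IsPreconnected (boxA e) := by
  classical
  have h : boxA e = Set.pi Set.univ (fun i => if i = e then Metric.ball (0:ℂ) (radT n)
      else {x : ℂ | 1 / 8 < ‖x‖ ∧ ‖x‖ < 2}) := by
    ext z
    simp only [boxA, annu, Set.mem_ofPred_eq, Set.mem_pi, Set.mem_univ, true_implies]
    constructor
    · rintro ⟨h1, h2⟩ i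
      by_cases hi : i = e
      · subst hi; simpa using h2
      · simpa [hi] using h1 i hi
    · intro h
      refine ⟨fun i hi => by simpa [hi] using h i, by simpa using h e⟩
  rw [h]
  refine isPreconnected_univ_pi fun i => ?_
  split_ifs
  · exact (convex_ball _ _).isPreconnected
  · exact isPreconnected_ann

/-- The Levi condition at `q`: the mixed second derivative of `G` vanishes on the product of the
kernels of the two partial differentials. -/
def LeviAt {n : ℕ} (G : (Fin n → ℂ) × (Fin n → ℂ) → ℂ) (q : (Fin n → ℂ) × (Fin n → ℂ)) : Prop :=
  ∀ v u : Fin n → ℂ, fderiv ℂ G q (v, 0) = 0 → fderiv ℂ G q (0, u) = 0 →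
    fderiv ℂ (fderiv ℂ G) q (0, u) (v, 0) = 0

/-- The mixed second derivative of `G` at `v`, `u` after projecting them along the `e`-th basis
vectors to the kernels of the partial differentials; denominators are cleared, so that the
expression is holomorphic in `q`. -/
noncomputable def leviK {n : ℕ} (G : (Fin n → ℂ) × (Fin n → ℂ) → ℂ) (e : Fin n)
    (v u : Fin n → ℂ) (q : (Fin n → ℂ) × (Fin n → ℂ)) : ℂ :=
  fderiv ℂ (fderiv ℂ G) q
    (fderiv ℂ G q (0, Pi.single e 1) • (0, u) - fderiv ℂ G q (0, u) • (0, Pi.single e 1))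
    (fderiv ℂ G q (Pi.single e 1, 0) • (v, 0) - fderiv ℂ G q (v, 0) • (Pi.single e 1, 0))

theorem analyticAt_leviK {n : ℕ} {G : (Fin n → ℂ) × (Fin n → ℂ) → ℂ} {e : Fin n}
    {v u : Fin n → ℂ} {q : (Fin n → ℂ) × (Fin n → ℂ)} (h : AnalyticAt ℂ G q) :
    AnalyticAt ℂ (leviK G e v u) q := by
  have h1 := h.fderiv
  have h2 := h1.fderiv
  have h3 : ∀ a, AnalyticAt ℂ (fun q => fderiv ℂ G q a) q := fun a =>
    analyticAt_clm_apply h1 analyticAt_const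
  unfold leviK
  refine analyticAt_clm_apply (analyticAt_clm_apply h2 ?_) ?_
  · exact ((h3 _).smul analyticAt_const).sub ((h3 _).smul analyticAt_const)
  · exact ((h3 _).smul analyticAt_const).sub ((h3 _).smul analyticAt_const)

theorem leviK_eq_zero {n : ℕ} {G : (Fin n → ℂ) × (Fin n → ℂ) → ℂ} {e : Fin n}
    {v u : Fin n → ℂ} {q : (Fin n → ℂ) × (Fin n → ℂ)} (h : LeviAt G q) :
    leviK G e v u q = 0 := by
  have e1 : fderiv ℂ G q (0, Pi.single e 1) • ((0, u) : (Fin n → ℂ) × (Fin n → ℂ))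
      - fderiv ℂ G q (0, u) • (0, Pi.single e 1)
      = (0, fderiv ℂ G q (0, Pi.single e 1) • u - fderiv ℂ G q (0, u) • Pi.single e 1) := by
    simp
  have e2 : fderiv ℂ G q (Pi.single e 1, 0) • ((v, 0) : (Fin n → ℂ) × (Fin n → ℂ))
      - fderiv ℂ G q (v, 0) • (Pi.single e 1, 0)
      = (fderiv ℂ G q (Pi.single e 1, 0) • v - fderiv ℂ G q (v, 0) • Pi.single e 1, 0) := by
    simp
  rw [leviK, e1, e2]
  refine h _ _ ?_ ?_
  · rw [← e2, map_sub, map_smul, map_smul]; simp only [smul_eq_mul]; ring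
  · rw [← e1, map_sub, map_smul, map_smul]; simp only [smul_eq_mul]; ring

theorem leviAt_of_leviK {n : ℕ} {G : (Fin n → ℂ) × (Fin n → ℂ) → ℂ} {e : Fin n}
    {q : (Fin n → ℂ) × (Fin n → ℂ)} (h1 : fderiv ℂ G q (0, Pi.single e 1) ≠ 0)
    (h2 : fderiv ℂ G q (Pi.single e 1, 0) ≠ 0) (h : ∀ v u, leviK G e v u q = 0) :
    LeviAt G q := by
  intro v u hv hu
  have := h v u
  rw [leviK, hv, hu, zero_smul, zero_smul, sub_zero, sub_zero, map_smul, map_smul] at this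
  simpa [h1, h2] using this

theorem fderiv_comp_swap {n : ℕ} {G : (Fin n → ℂ) × (Fin n → ℂ) → ℂ}
    {q : (Fin n → ℂ) × (Fin n → ℂ)} (h : DifferentiableAt ℂ G q.swap)
    (v : (Fin n → ℂ) × (Fin n → ℂ)) :
    fderiv ℂ (fun q => G q.swap) q v = fderiv ℂ G q.swap v.swap := by
  have h1 : HasFDerivAt (fun q : (Fin n → ℂ) × (Fin n → ℂ) => q.swap)
      ((ContinuousLinearMap.snd ℂ (Fin n → ℂ) (Fin n → ℂ)).prod
        (ContinuousLinearMap.fst ℂ (Fin n → ℂ) (Fin n → ℂ))) q :=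
    hasFDerivAt_snd.prodMk hasFDerivAt_fst
  have h2 : HasFDerivAt (fun q => G q.swap) _ q :=
    HasFDerivAt.comp (f := fun q : (Fin n → ℂ) × (Fin n → ℂ) => q.swap) q h.hasFDerivAt h1
  rw [h2.fderiv]; rfl

theorem NearMon.dz_ne {n : ℕ} (hn : 2 ≤ n) {G : (Fin n → ℂ) × (Fin n → ℂ) → ℂ} (hG : NearMon G)
    {e : Fin n} {q : (Fin n → ℂ) × (Fin n → ℂ)} (hq : ‖q‖ ≤ radL n - 1) (hw : q.1 ∈ annu e) :
    fderiv ℂ G q (Pi.single e 1, 0) ≠ 0 := by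
  have hq' : ‖q.swap‖ ≤ radL n - 1 := by
    rw [Prod.norm_def] at *
    rwa [Prod.fst_swap, Prod.snd_swap, max_comm]
  have h1 := hG.swap.dw_ne hn hq' (e := e) hw
  rwa [fderiv_comp_swap (by simpa using (hG.an q (NearMon.mem hq)).differentiableAt)] at h1

theorem radT_ge (n : ℕ) : 3 ≤ radT n := by
  have := one_le_pow32 n
  unfold radT; linarith

theorem star_update {n : ℕ} (e : Fin n) (p : Fin n → ℂ) (s : ℂ) :
    star (Function.update p e s) = Function.update (star p) e (star s) := by
  ext i; rcases eq_or_ne i e with rfl | h <;> simp [*]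

theorem star_mem_annu {n : ℕ} {e : Fin n} {p : Fin n → ℂ} (hp : p ∈ annu e) :
    star p ∈ annu e := by
  intro i hi; simpa using hp i hi

theorem update_mem_annu {n : ℕ} {e : Fin n} {p : Fin n → ℂ} (hp : p ∈ annu e) (s : ℂ) :
    Function.update p e s ∈ annu e := by
  intro i hi; simpa [Function.update_of_ne hi] using hp i hi

theorem update_mem_boxA {n : ℕ} {e : Fin n} {p : Fin n → ℂ} (hp : p ∈ annu e) {s : ℂ}
    (hs : ‖s‖ < radT n) : Function.update p e s ∈ boxA e :=
  ⟨update_mem_annu hp s, by simpa using hs⟩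

theorem mem_boxA_of_mem_ball {n : ℕ} {e : Fin n} {z : Fin n → ℂ}
    (hz : z ∈ Metric.ball (fun _ => (1 / 2 : ℂ)) (1 / 4)) : z ∈ boxA e := by
  have hT := radT_ge n
  have h1 : ∀ i, ‖z i - 1 / 2‖ < 1 / 4 := by
    rw [mem_ball_iff_norm] at hz
    intro i
    exact (norm_le_pi_norm (z - fun _ => (1 / 2 : ℂ)) i).trans_lt hz
  have h2 : ∀ i, 1 / 8 < ‖z i‖ ∧ ‖z i‖ < 2 := by
    intro i
    have e1 : ‖(1 / 2 : ℂ)‖ = 1 / 2 := by norm_num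
    have h3 := norm_sub_norm_le (1 / 2 : ℂ) (1 / 2 - z i)
    have h4 := norm_add_le (z i - 1 / 2) (1 / 2 : ℂ)
    have h5 := h1 i
    rw [sub_sub_cancel, norm_sub_rev (1 / 2 : ℂ)] at h3
    rw [sub_add_cancel] at h4
    constructor <;> linarith
  exact ⟨fun i _ => h2 i, by linarith [(h2 e).2]⟩

/-- With the coordinates `p_i`, `i ≠ e`, fixed, `G (p, p̄) = 0` has a solution in `p_e` with
prescribed imaginary part `y` of `p₁⋯pₙ`, by the intermediate value theorem in the real part. In
particular each slice contains infinitely many real points of `{G = 0}`. -/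
theorem exists_real_zero {n : ℕ} (hn : 2 ≤ n) {G : (Fin n → ℂ) × (Fin n → ℂ) → ℂ}
    (hG : NearMon G) (hreal : ∀ p : Fin n → ℂ, ‖p‖ ≤ radL n → (G (p, star p)).im = 0)
    {e : Fin n} {p : Fin n → ℂ} (hp : p ∈ annu e) {y : ℝ} (hy : y ∈ Set.Icc (0:ℝ) 1) :
    ∃ s : ℂ, ‖s‖ ≤ 2 * 8 ^ n ∧ (s * pe e p).im = y ∧
      G (Function.update p e s, star (Function.update p e s)) = 0 := by
  have hp0 := (rho_lt_pe hn hp).2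
  have hP : pe e p ≠ 0 := norm_pos_iff.1 hp0
  have h8 := pow_eighth_le_pe hp
  let σ : ℝ → ℂ := fun x => ((x : ℂ) + y * Complex.I) / pe e p
  have hσc : Continuous σ := by fun_prop
  have hσP : ∀ x, σ x * pe e p = (x : ℂ) + y * Complex.I := fun x => by
    simp only [σ]; field_simp
  have hσn : ∀ x ∈ Set.Icc (-1:ℝ) 1, ‖σ x‖ ≤ 2 * 8 ^ n := by
    intro x hx
    rw [norm_div, div_le_iff₀ hp0]
    have h1 : ‖(x : ℂ) + y * Complex.I‖ ≤ 2 := by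
      refine (norm_add_le _ _).trans ?_
      rw [norm_mul, Complex.norm_I, mul_one, Complex.norm_real, Complex.norm_real,
        Real.norm_eq_abs, Real.norm_eq_abs]
      have := abs_le.2 hx
      have := abs_le.2 ⟨by linarith [hy.1], hy.2⟩
      linarith
    nlinarith
  have hsm : (2:ℝ) * 8 ^ n < radT n := by
    have : (8:ℝ) ^ n ≤ 32 ^ n := pow_le_pow_left₀ (by norm_num) (by norm_num) n
    have := one_le_pow32 n
    unfold radT; linarith
  have hTL : radT n ≤ radL n := by
    have := one_le_pow32 n
    have := radT_ge n
    unfold radL; nlinarith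
  have hpn : ∀ x ∈ Set.Icc (-1:ℝ) 1, ‖Function.update p e (σ x)‖ ≤ radL n := by
    intro x hx
    have hT := radT_ge n
    refine (pi_norm_le_iff_of_nonneg (by linarith)).2 fun i => ?_
    rcases eq_or_ne i e with rfl | h
    · rw [Function.update_self]; linarith [hσn x hx]
    · rw [Function.update_of_ne h]; linarith [(hp i h).2]
  have hmem : ∀ x ∈ Set.Icc (-1:ℝ) 1,
      (Function.update p e (σ x), star (Function.update p e (σ x)))
        ∈ Metric.closedBall (0 : (Fin n → ℂ) × (Fin n → ℂ)) (radL n) := by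
    intro x hx
    rw [mem_closedBall_zero_iff, Prod.norm_def]
    simpa using hpn x hx
  let φ : ℝ → ℝ := fun x => (G (Function.update p e (σ x), star (Function.update p e (σ x)))).re
  have hφc : ContinuousOn φ (Set.Icc (-1) 1) := by
    intro x hx
    refine ContinuousAt.continuousWithinAt ?_
    refine Complex.continuous_re.continuousAt.comp ?_
    refine ContinuousAt.comp (f := fun x => (Function.update p e (σ x),
      star (Function.update p e (σ x)))) (hG.an _ (hmem x hx)).continuousAt ?_
    have hu : Continuous fun x => Function.update p e (σ x) := continuous_const.update e hσc
    exact (hu.prodMk hu.star).continuousAt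
  have hmon : ∀ x, mon (Function.update p e (σ x), star (Function.update p e (σ x)))
      = ((2 * x : ℝ) : ℂ) := by
    intro x
    have h1 : ∏ i, Function.update p e (σ x) i = (x : ℂ) + y * Complex.I := by
      rw [prod_update, hσP]
    have h2 : ∏ i, star (Function.update p e (σ x)) i = star ((x : ℂ) + y * Complex.I) := by
      rw [← h1, star_prod]; rfl
    rw [mon, h1, h2]
    apply Complex.ext <;> simp <;> ring
  have hφn : ∀ x ∈ Set.Icc (-1:ℝ) 1, |φ x - 2 * x| ≤ rho n := by
    intro x hx
    have := hG.near _ (hmem x hx)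
    rw [hmon] at this
    refine le_trans ?_ ((Complex.abs_re_le_norm _).trans this)
    simp [φ]
  have hr := rho_le n hn
  have hm1 := abs_le.1 (hφn (-1) (by norm_num))
  have hp1 := abs_le.1 (hφn 1 (by norm_num))
  obtain ⟨x, hx, hx0⟩ := intermediate_value_Icc (by norm_num : (-1:ℝ) ≤ 1) hφc
    (show (0:ℝ) ∈ Set.Icc (φ (-1)) (φ 1) from ⟨by linarith [hm1.2], by linarith [hp1.1]⟩)
  refine ⟨σ x, hσn x hx, by rw [hσP]; simp, ?_⟩
  exact Complex.ext hx0 (hreal _ (hpn x hx))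

/-- The Levi condition, assumed at the real points of `{G = 0}`, propagates to the whole
chart `{(z, w) : z, w ∈ boxA e, G = 0}`. -/
theorem levi_on_chart {n : ℕ} (hn : 2 ≤ n) {G : (Fin n → ℂ) × (Fin n → ℂ) → ℂ}
    (hG : NearMon G) (hreal : ∀ p : Fin n → ℂ, ‖p‖ ≤ radL n → (G (p, star p)).im = 0)
    (hL : ∀ p : Fin n → ℂ, ‖p‖ ≤ radL n → G (p, star p) = 0 → fderiv ℂ G (p, star p) ≠ 0 →
      LeviAt G (p, star p))
    {e : Fin n} {γ : (Fin n → ℂ) × (Fin n → ℂ) → ℂ}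
    (hγ : ∀ z ∈ slab e (radT n), ∀ w ∈ annu e,
      ‖γ (z, w)‖ < 32 ^ n * radT n ∧ AnalyticAt ℂ γ (z, w) ∧
      ∀ s : ℂ, ‖s‖ ≤ 32 ^ n * radT n → (G (z, Function.update w e s) = 0 ↔ s = γ (z, w))) :
    ∀ z ∈ boxA e, ∀ w ∈ boxA e, LeviAt G (z, Function.update w e (γ (z, w))) := by
  have hT := radT_ge n
  have hn' : ∀ z ∈ boxA e, ∀ w ∈ annu e, ‖(z, Function.update w e (γ (z, w)))‖ ≤ radL n - 1 := by
    intro z hz w hw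
    exact norm_pair_update_le (by linarith) le_rfl (boxA_subset_slab hz) hw
      (hγ z (boxA_subset_slab hz) w hw).1.le
  suffices h : ∀ v u, ∀ z ∈ boxA e, ∀ w ∈ boxA e,
      leviK G e v u (z, Function.update w e (γ (z, w))) = 0 by
    intro z hz w hw
    refine leviAt_of_leviK (e := e) ?_ ?_ fun v u => h v u z hz w hw
    · exact hG.dw_ne hn (hn' z hz w hw.1) (update_mem_annu hw.1 _)
    · exact hG.dz_ne hn (hn' z hz w hw.1) hz.1
  intro v u
  let k : (Fin n → ℂ) × (Fin n → ℂ) → ℂ := fun q =>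
    leviK G e v u (q.1, Function.update q.2 e (γ q))
  have hk : ∀ z ∈ boxA e, ∀ w ∈ annu e, AnalyticAt ℂ k (z, w) := by
    intro z hz w hw
    have h1 : AnalyticAt ℂ (fun q : (Fin n → ℂ) × (Fin n → ℂ) => (q.1, updL e (q.2, γ q)))
        (z, w) := by
      refine analyticAt_fst.prod (((updL e).analyticAt _).fun_comp (analyticAt_snd.prod ?_))
      exact (hγ z (boxA_subset_slab hz) w hw).2.1
    simp only [updL_apply] at h1
    exact AnalyticAt.fun_comp (f := fun q : (Fin n → ℂ) × (Fin n → ℂ) =>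
      (q.1, Function.update q.2 e (γ q)))
      (analyticAt_leviK (hG.an _ (NearMon.mem (hn' z hz w hw)))) h1
  have hdiag : ∀ p ∈ boxA e, k (p, star p) = 0 := by
    intro p hp
    -- on the slice, `k` vanishes at infinitely many points: the real zeros of `G`
    let φ : ℂ → ℂ := fun s => k (Function.update p e s, star p)
    have hφ : AnalyticOnNhd ℂ φ (Metric.ball 0 (radT n)) := by
      intro s hs
      rw [mem_ball_zero_iff] at hs
      have h1 : AnalyticAt ℂ (fun s : ℂ => (updL e (p, s), star p)) s :=
        (((updL e).analyticAt _).fun_comp (analyticAt_const.prod analyticAt_id)).prod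
          analyticAt_const
      simp only [updL_apply] at h1
      exact AnalyticAt.fun_comp (f := fun s : ℂ => (Function.update p e s, star p))
        (hk _ (update_mem_boxA hp.1 hs) _ (star_mem_annu hp.1)) h1
    choose! σ hσ1 hσ2 hσ3 using fun y hy => exists_real_zero hn hG hreal hp.1 (y := y) hy
    have hsm : (2:ℝ) * 8 ^ n < radT n := by
      have : (8:ℝ) ^ n ≤ 32 ^ n := pow_le_pow_left₀ (by norm_num) (by norm_num) n
      have := one_le_pow32 n
      unfold radT; linarith
    have hzero : ∀ y ∈ Set.Icc (0:ℝ) 1, φ (σ y) = 0 := by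
      intro y hy
      have hs : ‖σ y‖ < radT n := (hσ1 y hy).trans_lt hsm
      have hmem := update_mem_boxA hp.1 hs
      have h0 := hσ3 y hy
      have hsY : ‖star (σ y)‖ ≤ 32 ^ n * radT n := by
        rw [norm_star]
        have := one_le_pow32 n
        nlinarith
      have hst := hσ3 y hy
      rw [star_update] at hst
      have hγe := ((hγ _ (boxA_subset_slab hmem) _ (star_mem_annu hp.1)).2.2 _ hsY).1 hst
      have hq : (Function.update p e (σ y), Function.update (star p) e
          (γ (Function.update p e (σ y), star p)))
          = (Function.update p e (σ y), star (Function.update p e (σ y))) := by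
        rw [← hγe, star_update]
      have hnq := hn' _ hmem _ (star_mem_annu hp.1)
      have hdw := hG.dw_ne hn hnq (e := e) (update_mem_annu (star_mem_annu hp.1) _)
      change leviK G e v u (Function.update p e (σ y), Function.update (star p) e
          (γ (Function.update p e (σ y), star p))) = 0
      rw [hq] at hnq hdw ⊢
      refine leviK_eq_zero (hL _ ?_ h0 ?_)
      · have := norm_fst_le (Function.update p e (σ y), star (Function.update p e (σ y)))
        simp only at this
        linarith
      · intro h; rw [h] at hdw; simp at hdw
    have hinf : (σ '' Set.Icc (0:ℝ) 1).Infinite := by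
      refine (Set.Icc_infinite (by norm_num)).image fun y hy y' hy' h => ?_
      rw [← hσ2 y hy, ← hσ2 y' hy', h]
    obtain ⟨s₀, hs₀, hacc⟩ := hinf.exists_accPt_of_subset_isCompact
      (isCompact_closedBall (0:ℂ) (2 * 8 ^ n)) (by
        rintro _ ⟨y, hy, rfl⟩
        simpa using hσ1 y hy)
    rw [accPt_iff_frequently_nhdsNE] at hacc
    have hfreq : ∃ᶠ s in 𝓝[≠] s₀, φ s = 0 := hacc.mono (by
      rintro _ ⟨y, hy, rfl⟩; exact hzero y hy)
    have := hφ.eqOn_zero_of_preconnected_of_frequently_eq_zero (convex_ball _ _).isPreconnected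
      (show s₀ ∈ Metric.ball 0 (radT n) by
        rw [mem_closedBall_zero_iff] at hs₀
        rw [mem_ball_zero_iff]; linarith) hfreq
      (show p e ∈ Metric.ball 0 (radT n) by simpa using hp.2)
    simpa [φ] using this
  have hball := fun z => mem_boxA_of_mem_ball (e := e) (z := z)
  have hstar : star (fun _ : Fin n => (1 / 2 : ℂ)) = fun _ => (1 / 2 : ℂ) := by
    ext i; simp
  have hnear : ∀ q ∈ Metric.ball ((fun _ : Fin n => (1 / 2 : ℂ)), star (fun _ : Fin n => (1 / 2 : ℂ)))
      (1 / 4 / 4), k q = 0 := by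
    refine eq_zero_of_real_points ?_ fun z hz => hdiag z (hball z hz)
    rintro ⟨z, w⟩ hq
    rw [← ball_prod_same, hstar] at hq
    exact (hk z (hball z hq.1) w (hball w hq.2).1).differentiableAt.differentiableWithinAt
  have hAn : AnalyticOnNhd ℂ k (boxA e ×ˢ boxA e) := fun q hq => hk q.1 hq.1 q.2 hq.2.1
  have hc0 := hball (fun _ => (1 / 2 : ℂ)) (Metric.mem_ball_self (by norm_num))
  have := hAn.eqOn_zero_of_preconnected_of_eventuallyEq_zero
    ((isPreconnected_boxA e).prod (isPreconnected_boxA e))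
    (show ((fun _ : Fin n => (1 / 2 : ℂ)), (fun _ : Fin n => (1 / 2 : ℂ))) ∈ boxA e ×ˢ boxA e from
      ⟨hc0, hc0⟩) (by
        rw [hstar] at hnear
        filter_upwards [Metric.ball_mem_nhds _ (by norm_num : (0:ℝ) < 1 / 4 / 4)] with q hq
        exact hnear q hq)
  intro z hz w hw
  exact this (show (z, w) ∈ boxA e ×ˢ boxA e from ⟨hz, hw⟩)

/-! ### The separated first integral -/

/-- On the chart, the kernel of `dG (·, 0)` at a zero `(z, w)` depends only on `z`. -/
theorem ker_dz_indep {n : ℕ} (hn : 2 ≤ n) {G : (Fin n → ℂ) × (Fin n → ℂ) → ℂ}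
    (hG : NearMon G) {e : Fin n} {γ : (Fin n → ℂ) × (Fin n → ℂ) → ℂ}
    (hγ : ∀ z ∈ slab e (radT n), ∀ w ∈ annu e,
      ‖γ (z, w)‖ < 32 ^ n * radT n ∧ AnalyticAt ℂ γ (z, w) ∧
      ∀ s : ℂ, ‖s‖ ≤ 32 ^ n * radT n → (G (z, Function.update w e s) = 0 ↔ s = γ (z, w)))
    (hLevi : ∀ z ∈ boxA e, ∀ w ∈ boxA e, LeviAt G (z, Function.update w e (γ (z, w))))
    {z : Fin n → ℂ} (hz : z ∈ boxA e) {w w' : Fin n → ℂ} (hw : w ∈ boxA e) (hw' : w' ∈ boxA e)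
    {v : Fin n → ℂ} (hv : fderiv ℂ G (z, Function.update w e (γ (z, w))) (v, 0) = 0) :
    fderiv ℂ G (z, Function.update w' e (γ (z, w'))) (v, 0) = 0 := by
  have hT := radT_ge n
  have hzs := boxA_subset_slab hz
  have hn' : ∀ w ∈ boxA e, ‖(z, Function.update w e (γ (z, w)))‖ ≤ radL n - 1 := fun w hw =>
    norm_pair_update_le (by linarith) le_rfl hzs hw.1 (hγ z hzs w hw.1).1.le
  have hdz : ∀ w ∈ boxA e,
      fderiv ℂ G (z, Function.update w e (γ (z, w))) (Pi.single e 1, 0) ≠ 0 := fun w hw =>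
    hG.dz_ne hn (hn' w hw) hz.1
  let Q : (Fin n → ℂ) → (Fin n → ℂ) × (Fin n → ℂ) := fun w => (z, Function.update w e (γ (z, w)))
  let A : (Fin n → ℂ) → ℂ := fun w => fderiv ℂ G (Q w) (v, 0)
  let D : (Fin n → ℂ) → ℂ := fun w => fderiv ℂ G (Q w) (Pi.single e 1, 0)
  have hD0 : ∀ w ∈ boxA e, D w ≠ 0 := hdz
  have hQ : ∀ w ∈ boxA e, DifferentiableAt ℂ Q w := by
    intro w hw
    have h0 : AnalyticAt ℂ (fun w => γ (z, w)) w :=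
      AnalyticAt.fun_comp (f := fun w => (z, w)) (hγ z hzs w hw.1).2.1
        (analyticAt_const.prod analyticAt_id)
    have h1 : AnalyticAt ℂ (fun w : Fin n → ℂ => (z, updL e (w, γ (z, w)))) w :=
      analyticAt_const.prod (((updL e).analyticAt _).fun_comp (analyticAt_id.prod h0))
    simp only [updL_apply] at h1
    exact h1.differentiableAt
  have hder : ∀ w ∈ boxA e, ∀ x, HasFDerivAt (fun w => fderiv ℂ G (Q w) x)
      (((fderiv ℂ (fderiv ℂ G) (Q w)).comp (fderiv ℂ Q w)).flip x) w := by
    intro w hw x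
    have h1 : HasFDerivAt (fderiv ℂ G) (fderiv ℂ (fderiv ℂ G) (Q w)) (Q w) :=
      (hG.an _ (NearMon.mem (hn' w hw))).fderiv.differentiableAt.hasFDerivAt
    exact ((h1.comp w (hQ w hw).hasFDerivAt).clm_apply (hasFDerivAt_const x w)).congr_fderiv
      (by ext; simp)
  -- the tangent vectors of the chart in the fibre over `z` are of the form `(0, u)`
  have hfst : ∀ w ∈ boxA e, ∀ δ, fderiv ℂ Q w δ = (0, (fderiv ℂ Q w δ).2) := by
    intro w hw δ
    have h1 : HasFDerivAt (fun w => (Q w).1)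
        ((ContinuousLinearMap.fst ℂ _ _).comp (fderiv ℂ Q w)) w := (hQ w hw).hasFDerivAt.fst
    have h2 : HasFDerivAt (fun w => (Q w).1) (0 : (Fin n → ℂ) →L[ℂ] (Fin n → ℂ)) w :=
      hasFDerivAt_const z w
    have h3 := congrArg (fun L => L δ) (h1.unique h2)
    exact Prod.ext h3 rfl
  have htan : ∀ w ∈ boxA e, ∀ δ, fderiv ℂ G (Q w) (fderiv ℂ Q w δ) = 0 := by
    intro w hw δ
    have h1 : HasFDerivAt (fun w => G (Q w)) ((fderiv ℂ G (Q w)).comp (fderiv ℂ Q w)) w :=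
      (hG.an _ (NearMon.mem (hn' w hw))).differentiableAt.hasFDerivAt.comp w
        (hQ w hw).hasFDerivAt
    have h2 : HasFDerivAt (fun w => G (Q w)) (0 : (Fin n → ℂ) →L[ℂ] ℂ) w := by
      refine (hasFDerivAt_const (0:ℂ) w).congr_of_eventuallyEq ?_
      filter_upwards [(isOpen_boxA e).mem_nhds hw] with x hx
      exact ((hγ z hzs x hx.1).2.2 _ (hγ z hzs x hx.1).1.le).2 rfl
    exact congrArg (fun L => L δ) (h1.unique h2)
  have hR : ∀ w ∈ boxA e, HasFDerivAt (fun w => A w * (D w)⁻¹) (0 : (Fin n → ℂ) →L[ℂ] ℂ) w := by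
    intro w hw
    have hD := hD0 w hw
    have h1 := (hder w hw (v, 0)).mul
      ((hasDerivAt_inv hD).comp_hasFDerivAt w (hder w hw (Pi.single e 1, 0)))
    refine h1.congr_fderiv ?_
    ext δ
    have h2 := hLevi z hz w hw (D w • v - A w • Pi.single e 1) (fderiv ℂ Q w δ).2 (by
      have : ((D w • v - A w • Pi.single e 1, 0) : (Fin n → ℂ) × (Fin n → ℂ))
        = D w • (v, 0) - A w • (Pi.single e 1, 0) := by simp
      rw [this, map_sub, map_smul, map_smul]
      change D w * A w - A w * D w = 0
      ring) (by
      rw [← hfst w hw]; exact htan w hw δ)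
    have e1 : ((D w • v - A w • Pi.single e 1, 0) : (Fin n → ℂ) × (Fin n → ℂ))
        = D w • (v, 0) - A w • (Pi.single e 1, 0) := by simp
    rw [← hfst w hw, e1, map_sub, map_smul, map_smul, smul_eq_mul, smul_eq_mul] at h2
    simp only [Function.comp_apply, add_apply, smul_apply, ContinuousLinearMap.flip_apply,
      ContinuousLinearMap.comp_apply, zero_apply, smul_eq_mul]
    change A w * (-(D w ^ 2)⁻¹ * fderiv ℂ (fderiv ℂ G) (Q w) (fderiv ℂ Q w δ) (Pi.single e 1, 0))
      + (D w)⁻¹ * fderiv ℂ (fderiv ℂ G) (Q w) (fderiv ℂ Q w δ) (v, 0) = 0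
    change D w * fderiv ℂ (fderiv ℂ G) (Q w) (fderiv ℂ Q w δ) (v, 0)
      - A w * fderiv ℂ (fderiv ℂ G) (Q w) (fderiv ℂ Q w δ) (Pi.single e 1, 0) = 0 at h2
    field_simp
    linear_combination h2
  have hconst := (isOpen_boxA e).is_const_of_fderiv_eq_zero (isPreconnected_boxA e)
    (fun x hx => (hR x hx).differentiableAt.differentiableWithinAt)
    (fun x hx => (hR x hx).fderiv) hw hw'
  have hA : A w = 0 := hv
  simp only [hA, zero_mul] at hconst
  have := mul_eq_zero.1 hconst.symm
  exact this.resolve_right (inv_ne_zero (hD0 w' hw'))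

/-- The `e`-th coordinate `a z = γ (z, 1)` of the zero over `z` on the transversal
`w_i = 1`, `i ≠ e`, is a first integral of the foliation `ker dG (·, 0)` of the chart. -/
theorem fderiv_transversal {n : ℕ} (hn : 2 ≤ n) {G : (Fin n → ℂ) × (Fin n → ℂ) → ℂ}
    (hG : NearMon G) {e : Fin n} {γ : (Fin n → ℂ) × (Fin n → ℂ) → ℂ}
    (hγ : ∀ z ∈ slab e (radT n), ∀ w ∈ annu e,
      ‖γ (z, w)‖ < 32 ^ n * radT n ∧ AnalyticAt ℂ γ (z, w) ∧
      ∀ s : ℂ, ‖s‖ ≤ 32 ^ n * radT n → (G (z, Function.update w e s) = 0 ↔ s = γ (z, w)))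
    (hLevi : ∀ z ∈ boxA e, ∀ w ∈ boxA e, LeviAt G (z, Function.update w e (γ (z, w))))
    {z : Fin n → ℂ} (hz : z ∈ boxA e) {w : Fin n → ℂ} (hw : w ∈ boxA e) (h0 : G (z, w) = 0)
    {v : Fin n → ℂ} (hv : fderiv ℂ G (z, w) (v, 0) = 0) :
    fderiv ℂ (fun z => γ (z, 1)) z v = 0 := by
  have hT := radT_ge n
  have hzs := boxA_subset_slab hz
  have h1A : (1 : Fin n → ℂ) ∈ boxA e :=
    ⟨fun i _ => by norm_num, by simp; linarith⟩
  have hwe : w e = γ (z, w) := by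
    refine ((hγ z hzs w hw.1).2.2 (w e) ?_).1 (by simpa using h0)
    have := one_le_pow32 n
    have := hw.2
    nlinarith
  have hv' : fderiv ℂ G (z, Function.update (1 : Fin n → ℂ) e (γ (z, 1))) (v, 0) = 0 := by
    refine ker_dz_indep hn hG hγ hLevi hz hw h1A ?_
    rw [← hwe]; simpa using hv
  have hin : ‖(z, Function.update (1 : Fin n → ℂ) e (γ (z, 1)))‖ ≤ radL n - 1 :=
    norm_pair_update_le (by linarith) le_rfl hzs h1A.1 (hγ z hzs 1 h1A.1).1.le
  have ha : DifferentiableAt ℂ (fun z => γ (z, 1)) z :=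
    (AnalyticAt.fun_comp (f := fun z => (z, (1 : Fin n → ℂ))) (hγ z hzs 1 h1A.1).2.1
        (analyticAt_id.prod analyticAt_const)).differentiableAt
  have hP := (hasFDerivAt_id z).prodMk ((updL e).hasFDerivAt.comp z
    ((hasFDerivAt_const (1 : Fin n → ℂ) z).prodMk ha.hasFDerivAt))
  have hgd : HasFDerivAt G (fderiv ℂ G (z, Function.update (1 : Fin n → ℂ) e (γ (z, 1))))
      (z, updL e (1, γ (z, 1))) := by
    rw [updL_apply]
    exact (hG.an _ (NearMon.mem hin)).differentiableAt.hasFDerivAt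
  have h1 := HasFDerivAt.comp z (f := fun z => (z, updL e (1, γ (z, 1)))) hgd hP
  have h2 : HasFDerivAt (G ∘ fun z => (z, updL e (1, γ (z, 1)))) (0 : (Fin n → ℂ) →L[ℂ] ℂ) z := by
    refine (hasFDerivAt_const (0:ℂ) z).congr_of_eventuallyEq ?_
    filter_upwards [(isOpen_slab e _).mem_nhds hzs] with x hx
    simp only [Function.comp_apply, updL_apply]
    exact ((hγ x hx 1 h1A.1).2.2 _ (hγ x hx 1 h1A.1).1.le).2 rfl
  have h3 := congrArg (fun L => L v) (h1.unique h2)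
  set a' := fderiv ℂ (fun z => γ (z, 1)) z v with ha'
  have h4 : fderiv ℂ G (z, Function.update (1 : Fin n → ℂ) e (γ (z, 1))) (v, updL e (0, a')) = 0 := h3
  have e1 : ((v, updL e (0, a')) : (Fin n → ℂ) × (Fin n → ℂ))
      = (v, 0) + a' • (0, Pi.single e 1) := by
    rw [updL_apply]
    ext i
    · simp
    · rcases eq_or_ne i e with rfl | h <;> simp [*]
  rw [e1, map_add, hv', map_smul, zero_add, smul_eq_mul] at h4
  exact (mul_eq_zero.1 h4).resolve_right (hG.dw_ne hn hin (update_mem_annu h1A.1 _))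

/-- The separated first integral: there are holomorphic `a`, `d` on polydiscs such that
`a z + d w` vanishes on the part of `{G = 0}` where the coordinates of index `≠ e` stay away
from `0`, and such that `a z + d w` is close to `-mon`. -/
theorem exists_first_integral {n : ℕ} (hn : 2 ≤ n) {G : (Fin n → ℂ) × (Fin n → ℂ) → ℂ}
    (hG : NearMon G) (hreal : ∀ p : Fin n → ℂ, ‖p‖ ≤ radL n → (G (p, star p)).im = 0)
    (hL : ∀ p : Fin n → ℂ, ‖p‖ ≤ radL n → G (p, star p) = 0 → fderiv ℂ G (p, star p) ≠ 0 →
      LeviAt G (p, star p)) (e : Fin n) :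
    ∃ a d : (Fin n → ℂ) → ℂ,
      (∀ z ∈ slab e 2, AnalyticAt ℂ a z ∧ ‖a z + ∏ i, z i‖ ≤ rho n) ∧
      (∀ w ∈ slab e 2, AnalyticAt ℂ d w ∧ ‖d w + ∏ i, w i‖ ≤ 2 * rho n) ∧
      ∀ z ∈ slab e 2, z ∈ annu e → ∀ w ∈ slab e 2, w ∈ annu e → G (z, w) = 0 → a z + d w = 0 := by
  have hT := radT_ge n
  have h32 := one_le_pow32 n
  obtain ⟨γ, hγ⟩ := exists_solution hn hG e (X := radT n) (by linarith) le_rfl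
  obtain ⟨γ₂, hγ₂⟩ := exists_solution hn hG.swap e (X := 2) (by linarith) (by linarith)
  simp only [Prod.swap_prod_mk] at hγ₂
  have hLevi := levi_on_chart hn hG hreal hL hγ
  have h1A : (1 : Fin n → ℂ) ∈ boxA e :=
    ⟨fun i _ => by norm_num, by simp; linarith⟩
  set h : Fin n → ℂ := fun _ => 1 / 2 with hh
  have hhA : h ∈ boxA e := mem_boxA_of_mem_ball (Metric.mem_ball_self (by norm_num))
  let a : (Fin n → ℂ) → ℂ := fun z => γ (z, 1)
  have hmono : ∀ z ∈ slab e 2, z ∈ slab e (radT n) := fun z hz =>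
    ⟨hz.1, by linarith [hz.2]⟩
  have ha : ∀ z ∈ slab e (radT n), AnalyticAt ℂ a z := fun z hz =>
    AnalyticAt.fun_comp (f := fun z => (z, (1 : Fin n → ℂ))) (hγ z hz 1 h1A.1).2.1
        (analyticAt_id.prod analyticAt_const)
  have ha2 : ∀ z ∈ slab e (radT n), ‖a z + ∏ i, z i‖ ≤ rho n := by
    intro z hz
    have h1 := hG.near _ (NearMon.mem (norm_pair_update_le (by linarith) le_rfl hz h1A.1
      (hγ z hz 1 h1A.1).1.le))
    rw [((hγ z hz 1 h1A.1).2.2 _ (hγ z hz 1 h1A.1).1.le).2 rfl, zero_sub, norm_neg, mon,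
      prod_update] at h1
    have : pe e (1 : Fin n → ℂ) = 1 := by simp [pe]
    rw [this, mul_one, add_comm] at h1
    exact h1
  -- `P w z` moves the `e`-th coordinate of `z` so that `(P w z, w)` is a zero of `G`; as `z` varies
  -- it runs through one leaf, on which the first integral `a` is constant
  let P : (Fin n → ℂ) → (Fin n → ℂ) → (Fin n → ℂ) := fun w z => Function.update z e (γ₂ (w, z))
  have hPA : ∀ w ∈ slab e 2, ∀ z ∈ annu e, P w z ∈ boxA e := by
    intro w hw z hz
    refine update_mem_boxA hz ((hγ₂ w hw z hz).1.trans_le ?_)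
    unfold radT; linarith
  have hP0 : ∀ w ∈ slab e 2, ∀ z ∈ annu e, G (P w z, w) = 0 := fun w hw z hz =>
    ((hγ₂ w hw z hz).2.2 _ (hγ₂ w hw z hz).1.le).2 rfl
  have hPn : ∀ w ∈ slab e 2, ∀ z ∈ annu e, ‖(P w z, w)‖ ≤ radL n - 1 := by
    intro w hw z hz
    have := norm_pair_update_le (by linarith) (by linarith) hw hz (hγ₂ w hw z hz).1.le
    rw [Prod.norm_def, max_comm] at this
    exact this
  refine ⟨a, fun w => - a (P w h), fun z hz => ⟨ha z (hmono z hz), ha2 z (hmono z hz)⟩,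
    fun w hw => ⟨?_, ?_⟩, ?_⟩
  · have h1 : AnalyticAt ℂ (fun w => updL e (h, γ₂ (w, h))) w :=
      ((updL e).analyticAt _).fun_comp (analyticAt_const.prod
        (AnalyticAt.fun_comp (f := fun w => (w, h)) (hγ₂ w hw h hhA.1).2.1
        (analyticAt_id.prod analyticAt_const)))
    simp only [updL_apply] at h1
    exact (AnalyticAt.fun_comp (f := fun w => P w h)
      (ha _ (boxA_subset_slab (hPA w hw h hhA.1))) h1).neg
  · have h1 := ha2 _ (boxA_subset_slab (hPA w hw h hhA.1))
    have h2 := hG.near _ (NearMon.mem (hPn w hw h hhA.1))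
    rw [hP0 w hw h hhA.1, zero_sub, norm_neg, mon] at h2
    have e1 : -a (P w h) + ∏ i, w i
        = (∏ i, P w h i + ∏ i, w i) - (a (P w h) + ∏ i, P w h i) := by ring
    rw [e1]
    refine (norm_sub_le _ _).trans ?_
    linarith
  · intro z hz hzA w hw hwA h0
    have hwB : w ∈ boxA e := ⟨hwA, by linarith [hw.2]⟩
    have hzB : z ∈ boxA e := ⟨hzA, by linarith [hz.2]⟩
    have hPz : P w z = z := by
      have : z e = γ₂ (w, z) := ((hγ₂ w hw z hzA).2.2 (z e) (by
        have := hz.2; nlinarith)).1 (by simpa using h0)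
      simp only [P, ← this, Function.update_eq_self]
    have hR : ∀ x ∈ boxA e, HasFDerivAt (fun x => a (P w x)) (0 : (Fin n → ℂ) →L[ℂ] ℂ) x := by
      intro x hx
      have h1 : AnalyticAt ℂ (fun x => updL e (x, γ₂ (w, x))) x :=
        ((updL e).analyticAt _).fun_comp (analyticAt_id.prod
          (AnalyticAt.fun_comp (f := fun x => (w, x)) (hγ₂ w hw x hx.1).2.1
          (analyticAt_const.prod analyticAt_id)))
      simp only [updL_apply] at h1
      have hPd : HasFDerivAt (P w) (fderiv ℂ (P w) x) x := h1.differentiableAt.hasFDerivAt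
      have hc := (ha _ (boxA_subset_slab (hPA w hw x hx.1))).differentiableAt.hasFDerivAt.comp x
        hPd
      refine hc.congr_fderiv ?_
      ext δ
      refine fderiv_transversal hn hG hγ hLevi (hPA w hw x hx.1) hwB (hP0 w hw x hx.1) ?_
      have h2 := HasFDerivAt.comp x (f := fun x => (P w x, w))
        (hG.an _ (NearMon.mem (hPn w hw x hx.1))).differentiableAt.hasFDerivAt
        (hPd.prodMk (hasFDerivAt_const w x))
      have h3 : HasFDerivAt (G ∘ fun x => (P w x, w)) (0 : (Fin n → ℂ) →L[ℂ] ℂ) x := by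
        refine (hasFDerivAt_const (0:ℂ) x).congr_of_eventuallyEq ?_
        filter_upwards [(isOpen_annu e).mem_nhds hx.1] with y hy
        exact hP0 w hw y hy
      exact congrArg (fun L => L δ) (h2.unique h3)
    have hconst := (isOpen_boxA e).is_const_of_fderiv_eq_zero (isPreconnected_boxA e)
      (fun x hx => (hR x hx).differentiableAt.differentiableWithinAt)
      (fun x hx => (hR x hx).fderiv) hzB hhA
    simp only [hPz] at hconst
    rw [hconst, add_neg_cancel]

/-! ### Division by `G` -/

/-- Cauchy's formula for a quotient whose denominator has only simple zeros in the disc, all of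
them zeros of the numerator. -/
theorem cauchy_quotient {φ g : ℂ → ℂ} (hφ : ∀ t, ‖t‖ ≤ 1 → AnalyticAt ℂ φ t)
    (hg : ∀ t, ‖t‖ ≤ 1 → AnalyticAt ℂ g t)
    (hz : ∀ t, ‖t‖ ≤ 1 → g t = 0 → φ t = 0 ∧ deriv g t ≠ 0)
    (hs : ∀ t, ‖t‖ = 1 → g t ≠ 0) (h0 : g 0 ≠ 0) :
    (2 * Real.pi * Complex.I : ℂ)⁻¹ • (∮ t in C(0, 1), t⁻¹ * (φ t / g t)) = φ 0 / g 0 := by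
  classical
  let k : ℂ → ℂ := fun t => if g t = 0 then deriv φ t / deriv g t else φ t / g t
  have hk : ∀ t, ‖t‖ ≤ 1 → DifferentiableAt ℂ k t := by
    intro t ht
    by_cases h : g t = 0
    · obtain ⟨h1, h2⟩ := hz t ht h
      have hφd : AnalyticAt ℂ (dslope φ t) t := by
        obtain ⟨p, hp⟩ := hφ t ht
        exact ⟨_, hp.has_fpower_series_dslope_fslope⟩
      have hgd : AnalyticAt ℂ (dslope g t) t := by
        obtain ⟨p, hp⟩ := hg t ht
        exact ⟨_, hp.has_fpower_series_dslope_fslope⟩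
      have hne : dslope g t t ≠ 0 := by rwa [dslope_same]
      refine (hφd.div hgd hne).differentiableAt.congr_of_eventuallyEq ?_
      filter_upwards [hgd.continuousAt.eventually_ne hne] with s hs'
      rcases eq_or_ne s t with rfl | hst
      · simp [k, h, dslope_same]
      · have hst' : s - t ≠ 0 := sub_ne_zero.2 hst
        have e1 : g s = (s - t) * dslope g t s := by
          have := sub_smul_dslope g t s
          rw [h, sub_zero, smul_eq_mul] at this; exact this.symm
        have e2 : φ s = (s - t) * dslope φ t s := by
          have := sub_smul_dslope φ t s
          rw [h1, sub_zero, smul_eq_mul] at this; exact this.symm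
        have hgs : g s ≠ 0 := by rw [e1]; exact mul_ne_zero hst' hs'
        simp only [k, if_neg hgs, Pi.div_apply]
        rw [e1, e2, mul_div_mul_left _ _ hst']
    · refine ((hφ t ht).div (hg t ht) h).differentiableAt.congr_of_eventuallyEq ?_
      filter_upwards [(hg t ht).continuousAt.eventually_ne h] with s hs'
      simp [k, hs']
  have hcl : DiffContOnCl ℂ k (Metric.ball 0 1) :=
    DifferentiableOn.diffContOnCl fun t ht => by
      rw [closure_ball _ one_ne_zero, mem_closedBall_zero_iff] at ht
      exact (hk t ht).differentiableWithinAt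
  have h1 := hcl.two_pi_i_inv_smul_circleIntegral_sub_inv_smul (w := 0) (by simp)
  have h2 : (∮ t in C(0, 1), t⁻¹ * (φ t / g t)) = ∮ t in C(0, 1), (t - 0)⁻¹ • k t := by
    refine circleIntegral.integral_congr zero_le_one fun t ht => ?_
    have := hs t (mem_sphere_zero_iff_norm.1 ht)
    simp [k, this]
  rw [h2, h1]
  simp [k, h0]

/-- All numerical comparisons with the perturbation size `rho n = (1/100) ^ n` have this form. -/
theorem pow_bounds {n : ℕ} (hn : 2 ≤ n) {x y : ℝ} (hx : 0 ≤ x) (hxy : x + 1 / 100 < y) :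
    x ^ n + rho n < y ^ n := by
  refine (pow_add_pow_le hx (by norm_num : (0:ℝ) ≤ 1 / 100) (by omega : n ≠ 0)).trans_lt ?_
  exact pow_lt_pow_left₀ hxy (by linarith) (by omega)

theorem norm_prod_le_pow {n : ℕ} {z : Fin n → ℂ} {c : ℝ} (h : ∀ i, ‖z i‖ ≤ c) :
    ‖∏ i, z i‖ ≤ c ^ n := by
  rw [norm_prod]
  refine (Finset.prod_le_prod (fun _ _ => norm_nonneg _) fun i _ => h i).trans ?_
  simp

theorem pow_le_norm_prod {n : ℕ} {z : Fin n → ℂ} {c : ℝ} (hc : 0 ≤ c) (h : ∀ i, c ≤ ‖z i‖) :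
    c ^ n ≤ ‖∏ i, z i‖ := by
  rw [norm_prod]
  refine le_trans ?_ (Finset.prod_le_prod (fun _ _ => hc) fun i _ => h i)
  simp

/-- Translation of the first variable by the vector `(t, …, t)`. -/
def shift {n : ℕ} (x : ((Fin n → ℂ) × (Fin n → ℂ)) × ℂ) : (Fin n → ℂ) × (Fin n → ℂ) :=
  (x.1.1 + fun _ => x.2, x.1.2)

theorem analyticAt_shift {n : ℕ} (x : ((Fin n → ℂ) × (Fin n → ℂ)) × ℂ) :
    AnalyticAt ℂ shift x := by
  refine AnalyticAt.prod (AnalyticAt.add (analyticAt_fst.comp analyticAt_fst) ?_)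
    (analyticAt_snd.comp analyticAt_fst)
  exact ((ContinuousLinearMap.pi fun _ : Fin n => ContinuousLinearMap.id ℂ ℂ).analyticAt _).fun_comp
    analyticAt_snd

theorem hasDerivAt_shift {n : ℕ} (q : (Fin n → ℂ) × (Fin n → ℂ)) (t : ℂ) :
    HasDerivAt (fun t => shift (q, t)) (1, 0) t := by
  refine HasDerivAt.prodMk ?_ (hasDerivAt_const t q.2)
  refine HasDerivAt.const_add q.1 ?_
  exact hasDerivAt_pi.2 fun _ => hasDerivAt_id t

/-- Lower bound for the derivative of the model along the translation `shift`. -/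
theorem le_norm_fderiv_mon_shift {n : ℕ} (hn : 2 ≤ n) {q : (Fin n → ℂ) × (Fin n → ℂ)} {t : ℂ}
    (hq : ∀ i, ‖q.1 i‖ ≤ 1 / 20) (ht : ‖t‖ ≤ 1) (ht' : 1 / 4 ≤ ‖t‖) :
    (1 / 5) ^ n ≤ ‖fderiv ℂ mon (shift (q, t)) (1, 0)‖ := by
  have hne : ∀ i, 1 / 5 ≤ ‖q.1 i + t‖ := by
    intro i
    have h1 := norm_sub_norm_le t (-q.1 i)
    rw [norm_neg, sub_neg_eq_add, add_comm] at h1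
    linarith [hq i]
  have hne0 : ∀ i, q.1 i + t ≠ 0 := fun i => norm_pos_iff.1 (by linarith [hne i])
  have h1 := (analyticAt_mon (shift (q, t))).differentiableAt.hasFDerivAt.comp_hasDerivAt t
    (hasDerivAt_shift q t)
  have h2 : (mon ∘ fun t => shift (q, t)) = fun t => ∏ i, (q.1 i + t) + ∏ i, q.2 i := by
    ext t; simp [mon, shift]
  rw [h2] at h1
  have hd : ∀ i, HasDerivAt (fun t => q.1 i + t) 1 t := fun i => (hasDerivAt_id t).const_add _
  have h3 : HasDerivAt (fun t => ∏ i, (q.1 i + t)) (fderiv ℂ mon (shift (q, t)) (1, 0)) t := by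
    have := h1.sub_const (∏ i, q.2 i)
    simpa using this
  have h4 := logDeriv_prod (s := Finset.univ) (f := fun i t => q.1 i + t) (x := t)
    (fun i _ => hne0 i) (fun i _ => (hd i).differentiableAt)
  have h5 : fderiv ℂ mon (shift (q, t)) (1, 0)
      = (∏ i, (q.1 i + t)) * ∑ i, (q.1 i + t)⁻¹ := by
    rw [logDeriv_apply, h3.deriv] at h4
    rw [div_eq_iff (Finset.prod_ne_zero_iff.2 fun i _ => hne0 i)] at h4
    rw [h4, mul_comm]
    congr 1
    refine Finset.sum_congr rfl fun i _ => ?_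
    rw [logDeriv_apply, (hd i).deriv, one_div]
  rw [h5, norm_mul]
  have h6 := pow_le_norm_prod (z := fun i => q.1 i + t) (by norm_num) hne
  have h7 : 1 ≤ ‖∑ i, (q.1 i + t)⁻¹‖ := by
    have h8 : ∀ i, 1 / 2 ≤ (t * (q.1 i + t)⁻¹).re := by
      intro i
      have e1 : t * (q.1 i + t)⁻¹ = 1 - q.1 i * (q.1 i + t)⁻¹ := by
        have := hne0 i
        field_simp; ring
      rw [e1, Complex.sub_re, Complex.one_re]
      have h9 := Complex.re_le_norm (q.1 i * (q.1 i + t)⁻¹)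
      have h10 : ‖q.1 i * (q.1 i + t)⁻¹‖ ≤ 1 / 2 := by
        rw [norm_mul, norm_inv, ← div_eq_mul_inv, div_le_iff₀ (by linarith [hne i])]
        linarith [hq i, hne i]
      linarith
    have h11 : (1:ℝ) ≤ (t * ∑ i, (q.1 i + t)⁻¹).re := by
      rw [Finset.mul_sum, Complex.re_sum]
      have h12 := Finset.sum_le_sum fun i (_ : i ∈ Finset.univ) => h8 i
      refine le_trans ?_ h12
      have : (2:ℝ) ≤ n := by exact_mod_cast hn
      simp; linarith
    have h13 := h11.trans (Complex.re_le_norm _)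
    rw [norm_mul] at h13
    nlinarith [norm_nonneg (∑ i, (q.1 i + t)⁻¹)]
  have : (0:ℝ) ≤ (1 / 5) ^ n := by positivity
  nlinarith

/-- A separated function `a z + d w`, close to `-mon` and vanishing on the part of `{G = 0}` where
the coordinates of index `≠ e` stay away from `0`, is near the origin a multiple `U * G` with `U`
a unit. The quotient `U` is a Cauchy integral over the circles `t ↦ (z + (t, …, t), w)`, `|t| = 1`,
on which `G` has no zeros; the factorization holds near `z = 0`, `w = (1/2, …, 1/2)`, where
`G` has only simple zeros in the disc, and then by the identity theorem. -/
theorem exists_unit {n : ℕ} (hn : 2 ≤ n) {G : (Fin n → ℂ) × (Fin n → ℂ) → ℂ}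
    (hG : NearMon G) {e : Fin n} {a d : (Fin n → ℂ) → ℂ}
    (ha : ∀ z ∈ slab e 2, AnalyticAt ℂ a z ∧ ‖a z + ∏ i, z i‖ ≤ rho n)
    (hd : ∀ w ∈ slab e 2, AnalyticAt ℂ d w ∧ ‖d w + ∏ i, w i‖ ≤ 2 * rho n)
    (had : ∀ z ∈ slab e 2, z ∈ annu e → ∀ w ∈ slab e 2, w ∈ annu e →
      G (z, w) = 0 → a z + d w = 0) :
    ∃ U : (Fin n → ℂ) × (Fin n → ℂ) → ℂ, DifferentiableAt ℂ U 0 ∧ U 0 ≠ 0 ∧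
      ∀ᶠ q in 𝓝 0, a q.1 + d q.2 = U q * G q := by
  have hT := radT_ge n
  have h32 := one_le_pow32 n
  have hRL : 2 ≤ radL n - 1 := by unfold radL; nlinarith
  set B : Set ((Fin n → ℂ) × (Fin n → ℂ)) := Metric.ball 0 (1 / 20) ×ˢ Metric.ball 0 (3 / 5)
    with hB
  have hBo : IsOpen B := Metric.isOpen_ball.prod Metric.isOpen_ball
  have hBc : Convex ℝ B := (convex_ball _ _).prod (convex_ball _ _)
  have h0B : (0 : (Fin n → ℂ) × (Fin n → ℂ)) ∈ B := by constructor <;> simp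
  have hB1 : ∀ q ∈ B, ∀ i, ‖q.1 i‖ < 1 / 20 := fun q hq i =>
    (norm_le_pi_norm q.1 i).trans_lt (by simpa using hq.1)
  have hB2 : ∀ q ∈ B, ∀ i, ‖q.2 i‖ < 3 / 5 := fun q hq i =>
    (norm_le_pi_norm q.2 i).trans_lt (by simpa using hq.2)
  have hs1 : ∀ q ∈ B, ∀ t : ℂ, ‖t‖ ≤ 1 → ∀ i, ‖q.1 i + t‖ < 11 / 10 := fun q hq t ht i => by
    have := norm_add_le (q.1 i) t
    linarith [hB1 q hq i]
  have hslab1 : ∀ q ∈ B, ∀ t : ℂ, ‖t‖ ≤ 1 → (shift (q, t)).1 ∈ slab e 2 := fun q hq t ht =>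
    ⟨fun i _ => by
      have := hs1 q hq t ht i
      change ‖q.1 i + t‖ < 2
      linarith, by
      have := hs1 q hq t ht e
      change ‖q.1 e + t‖ < 2
      linarith⟩
  have hslab2 : ∀ q ∈ B, q.2 ∈ slab e 2 := fun q hq =>
    ⟨fun i _ => by linarith [hB2 q hq i], by linarith [hB2 q hq e]⟩
  have hnorm : ∀ q ∈ B, ∀ t : ℂ, ‖t‖ ≤ 1 → ‖shift (q, t)‖ ≤ radL n - 1 := fun q hq t ht =>
    (norm_prod_mk_le (R := 2) (by norm_num) (fun i => by
      have := hs1 q hq t ht i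
      change ‖q.1 i + t‖ ≤ 2
      linarith) (fun i => by
      have := hB2 q hq i
      change ‖q.2 i‖ ≤ 2
      linarith)).trans hRL
  have hnear : ∀ q ∈ B, ∀ t : ℂ, ‖t‖ ≤ 1 → ‖G (shift (q, t)) - mon (shift (q, t))‖ ≤ rho n :=
    fun q hq t ht => hG.near _ (NearMon.mem (hnorm q hq t ht))
  have hmon : ∀ (q : (Fin n → ℂ) × (Fin n → ℂ)) (t : ℂ),
      mon (shift (q, t)) = ∏ i, (q.1 i + t) + ∏ i, q.2 i := fun q t => rfl
  have hGan : ∀ q ∈ B, ∀ t : ℂ, ‖t‖ ≤ 1 → AnalyticAt ℂ (fun x => G (shift x)) (q, t) :=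
    fun q hq t ht => (hG.an _ (NearMon.mem (hnorm q hq t ht))).fun_comp (analyticAt_shift _)
  let Φ : (Fin n → ℂ) × (Fin n → ℂ) → ℂ := fun q => a q.1 + d q.2
  have hΦ : ∀ q ∈ B, ∀ t : ℂ, ‖t‖ ≤ 1 → AnalyticAt ℂ Φ (shift (q, t)) := fun q hq t ht =>
    ((ha _ (hslab1 q hq t ht)).1.fun_comp analyticAt_fst).add
      (AnalyticAt.fun_comp (f := Prod.snd) (hd _ (hslab2 q hq)).1 analyticAt_snd)
  have hΦan : ∀ q ∈ B, ∀ t : ℂ, ‖t‖ ≤ 1 → AnalyticAt ℂ (fun x => Φ (shift x)) (q, t) :=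
    fun q hq t ht => (hΦ q hq t ht).fun_comp (analyticAt_shift _)
  have hsh0 : ∀ q : (Fin n → ℂ) × (Fin n → ℂ), shift (q, 0) = q := fun q => by
    ext i <;> simp [shift]
  have hG1 : ∀ q ∈ B, ∀ t : ℂ, ‖t‖ = 1 → G (shift (q, t)) ≠ 0 := by
    intro q hq t ht h
    have h1 := hnear q hq t ht.le
    rw [h, zero_sub, norm_neg, hmon] at h1
    have h2 := pow_le_norm_prod (z := fun i => q.1 i + t) (c := 19 / 20) (by norm_num) fun i => by
      have h1 := norm_sub_norm_le t (-q.1 i)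
      rw [norm_neg, sub_neg_eq_add, add_comm] at h1
      linarith [hB1 q hq i]
    have h3 := norm_prod_le_pow (z := q.2) fun i => (hB2 q hq i).le
    have h4 := norm_sub_le (∏ i, (q.1 i + t) + ∏ i, q.2 i) (∏ i, q.2 i)
    rw [add_sub_cancel_right] at h4
    have h5 := pow_bounds hn (x := 3 / 5) (y := 19 / 20) (by norm_num) (by norm_num)
    linarith
  let f : ((Fin n → ℂ) × (Fin n → ℂ)) × ℂ → ℂ := fun x => x.2⁻¹ * (Φ (shift x) / G (shift x))
  have hf : ∀ q ∈ B, ∀ t ∈ Metric.sphere (0:ℂ) 1, AnalyticAt ℂ f (q, t) := by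
    intro q hq t ht
    rw [mem_sphere_zero_iff_norm] at ht
    have ht0 : t ≠ 0 := by rintro rfl; simp at ht
    exact (analyticAt_snd.inv ht0).mul ((hΦan q hq t ht.le).div (hGan q hq t ht.le) (hG1 q hq t ht))
  let U : (Fin n → ℂ) × (Fin n → ℂ) → ℂ := fun q =>
    (2 * Real.pi * Complex.I : ℂ)⁻¹ • ∮ t in C(0, 1), f (q, t)
  have hU : ∀ q ∈ B, DifferentiableAt ℂ U q := fun q hq =>
    DifferentiableAt.fun_const_smul (differentiableAt_circleIntegral hBo hf hq)
      (2 * Real.pi * Complex.I : ℂ)⁻¹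
  refine ⟨U, hU 0 h0B, ?_, ?_⟩
  · -- on the unit circle over the origin `Φ / G` is close to `-1`
    have hr := rho_le n hn
    have hr0 := rho_pos n
    have hbd : ∀ t ∈ Metric.sphere (0:ℂ) 1, ‖f (0, t) + (t - 0)⁻¹‖ ≤ 1 / 2 := by
      intro t ht
      rw [mem_sphere_zero_iff_norm] at ht
      have hg0 := hG1 0 h0B t ht
      have e1 : f (0, t) + (t - 0)⁻¹
          = t⁻¹ * ((Φ (shift (0, t)) + G (shift (0, t))) / G (shift (0, t))) := by
        simp only [f]; field_simp; ring
      have h1 := hnear 0 h0B t ht.le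
      have h2 := (ha _ (hslab1 0 h0B t ht.le)).2
      have h3 := (hd _ (hslab2 0 h0B)).2
      have h4 : ‖Φ (shift (0, t)) + G (shift (0, t))‖ ≤ 4 * rho n := by
        have e2 : Φ (shift (0, t)) + G (shift (0, t))
            = (a (shift ((0 : (Fin n → ℂ) × (Fin n → ℂ)), t)).1
                + ∏ i, (shift ((0 : (Fin n → ℂ) × (Fin n → ℂ)), t)).1 i)
              + (d (0 : (Fin n → ℂ) × (Fin n → ℂ)).2 + ∏ i, (0 : (Fin n → ℂ) × (Fin n → ℂ)).2 i)
              + (G (shift (0, t)) - mon (shift ((0 : (Fin n → ℂ) × (Fin n → ℂ)), t))) := by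
          simp only [Φ, mon, shift]; ring
        rw [e2]
        refine (norm_add₃_le).trans ?_
        linarith
      have h5 : 1 - rho n ≤ ‖G (shift (0, t))‖ := by
        have e3 : mon (shift ((0 : (Fin n → ℂ) × (Fin n → ℂ)), t)) = t ^ n := by
          rw [hmon]; simp; omega
        rw [e3] at h1
        have h6 := norm_sub_norm_le (t ^ n) (t ^ n - G (shift (0, t)))
        rw [sub_sub_cancel, norm_pow, ht, one_pow, norm_sub_rev] at h6
        linarith
      rw [e1, norm_mul, norm_inv, ht, inv_one, one_mul, norm_div,
        div_le_iff₀ (by linarith)]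
      linarith
    have h1 := circleIntegral.norm_two_pi_i_inv_smul_integral_le_of_norm_le_const zero_le_one hbd
    rw [circleIntegral.integral_add, circleIntegral.integral_sub_center_inv _ one_ne_zero,
      smul_add] at h1
    · intro hU0
      change ‖U 0 + _‖ ≤ _ at h1
      rw [hU0, smul_eq_mul, inv_mul_cancel₀ (by simp [Real.pi_ne_zero])] at h1
      norm_num at h1
    · refine ContinuousOn.circleIntegrable zero_le_one fun t ht => ?_
      have h2 : ContinuousAt (fun t => f (0, t)) t :=
        ContinuousAt.comp (f := fun t => ((0 : (Fin n → ℂ) × (Fin n → ℂ)), t))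
          (hf 0 h0B t ht).continuousAt (by fun_prop)
      exact h2.continuousWithinAt
    · refine ContinuousOn.circleIntegrable zero_le_one fun t ht => ?_
      have ht0 : t - 0 ≠ 0 := by
        rw [sub_zero]; rintro rfl; simp at ht
      have h2 : ContinuousAt (fun z : ℂ => (z - 0)⁻¹) t :=
        ContinuousAt.inv₀ (f := fun z : ℂ => z - 0) (by fun_prop) ht0
      exact h2.continuousWithinAt
  · set o : (Fin n → ℂ) × (Fin n → ℂ) := (0, fun _ => 1 / 2) with ho
    set O : Set ((Fin n → ℂ) × (Fin n → ℂ)) :=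
      Metric.ball 0 (1 / 20) ×ˢ Metric.ball (fun _ => 1 / 2) (1 / 10) with hO
    have hoO : o ∈ O := ⟨Metric.mem_ball_self (by norm_num), Metric.mem_ball_self (by norm_num)⟩
    have hO2 : ∀ q ∈ O, ∀ i, ‖q.2 i - 1 / 2‖ < 1 / 10 := fun q hq i => by
      have := hq.2
      rw [mem_ball_iff_norm] at this
      exact (norm_le_pi_norm (q.2 - fun _ => (1 / 2 : ℂ)) i).trans_lt this
    have hhalf : ‖(1 / 2 : ℂ)‖ = 1 / 2 := by norm_num
    have hO3 : ∀ q ∈ O, ∀ i, 2 / 5 < ‖q.2 i‖ := fun q hq i => by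
      have h1 := norm_sub_norm_le (1 / 2 : ℂ) (1 / 2 - q.2 i)
      rw [sub_sub_cancel, norm_sub_rev (1 / 2 : ℂ)] at h1
      linarith [hO2 q hq i]
    have hOB : ∀ q ∈ O, q ∈ B := fun q hq => by
      refine ⟨hq.1, ?_⟩
      rw [mem_ball_zero_iff, pi_norm_lt_iff (by norm_num)]
      intro i
      have := norm_add_le (q.2 i - 1 / 2) (1 / 2 : ℂ)
      rw [sub_add_cancel] at this
      linarith [hO2 q hq i]
    have hsmall : ∀ q ∈ O, ∀ t : ℂ, ‖t‖ ≤ 1 → G (shift (q, t)) = 0 → 1 / 4 < ‖t‖ := by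
      intro q hq t ht h
      by_contra hlt
      have h1 := hnear q (hOB q hq) t ht
      rw [h, zero_sub, norm_neg, hmon] at h1
      have h2 := pow_le_norm_prod (z := q.2) (c := 2 / 5) (by norm_num) fun i => (hO3 q hq i).le
      have h3 := norm_prod_le_pow (z := fun i => q.1 i + t) (c := 3 / 10) fun i => by
        have := norm_add_le (q.1 i) t
        linarith [hB1 q (hOB q hq) i]
      have h4 := norm_sub_le (∏ i, (q.1 i + t) + ∏ i, q.2 i) (∏ i, (q.1 i + t))
      rw [add_sub_cancel_left] at h4
      have h5 := pow_bounds hn (x := 3 / 10) (y := 2 / 5) (by norm_num) (by norm_num)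
      linarith
    have hUG : ∀ q ∈ O, U q * G q - Φ q = 0 := by
      intro q hq
      have hqB := hOB q hq
      have hg0 : G (shift (q, 0)) ≠ 0 := fun h => by
        have := hsmall q hq 0 (by simp) h
        simp at this; linarith
      have hline : ∀ t, AnalyticAt ℂ (fun t : ℂ => (q, t)) t := fun t =>
        analyticAt_const.prod analyticAt_id
      have h1 := cauchy_quotient (φ := fun t => Φ (shift (q, t))) (g := fun t => G (shift (q, t)))
        (fun t ht => AnalyticAt.fun_comp (f := fun t : ℂ => (q, t)) (hΦan q hqB t ht) (hline t))
        (fun t ht => AnalyticAt.fun_comp (f := fun t : ℂ => (q, t)) (hGan q hqB t ht) (hline t))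
        (fun t ht h => by
          have htl := hsmall q hq t ht h
          constructor
          · refine had _ (hslab1 q hqB t ht) (fun i _ => ⟨?_, ?_⟩) _ (hslab2 q hqB)
              (fun i _ => ⟨show (1 / 8 : ℝ) < ‖q.2 i‖ by linarith [hO3 q hq i],
                show ‖q.2 i‖ < 2 by linarith [hB2 q hqB i]⟩) h
            · have h1 := norm_sub_norm_le t (-q.1 i)
              rw [norm_neg, sub_neg_eq_add, add_comm] at h1
              change 1 / 8 < ‖q.1 i + t‖
              linarith [hB1 q hqB i]
            · have := hs1 q hqB t ht i
              change ‖q.1 i + t‖ < 2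
              linarith
          · have h2 := (hG.an _ (NearMon.mem
              (hnorm q hqB t ht))).differentiableAt.hasFDerivAt.comp_hasDerivAt t
              (hasDerivAt_shift q t)
            have h3 : deriv (fun t => G (shift (q, t))) t = _ := h2.deriv
            rw [h3]
            intro h4
            have h5 := hG.fderiv_near (hnorm q hqB t ht) (v := (1, 0))
              (norm_prod_mk_le zero_le_one (by simp) (by simp))
            rw [h4, zero_sub, norm_neg] at h5
            have h6 := le_norm_fderiv_mon_shift hn (fun i => (hB1 q hqB i).le) ht htl.le
            have h7 := pow_bounds hn (x := 0) (y := 1 / 5) (by norm_num) (by norm_num)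
            rw [zero_pow (by omega)] at h7
            linarith)
        (fun t ht => hG1 q hqB t ht) hg0
      have h2 : U q = Φ q / G q := by
        simp only [hsh0] at h1
        exact h1
      rw [hsh0] at hg0
      rw [h2, div_mul_cancel₀ _ hg0, sub_self]
    have hdiff : DifferentiableOn ℂ (fun q => U q * G q - Φ q) B := by
      intro q hq
      have h1 := hG.an _ (NearMon.mem (hnorm q hq 0 (by simp)))
      have h2 := hΦ q hq 0 (by simp)
      rw [hsh0] at h1 h2
      exact (((hU q hq).mul h1.differentiableAt).sub h2.differentiableAt).differentiableWithinAt
    have hzero := eq_zero_of_convex hBo hBc hdiff (hOB o hoO) (by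
      filter_upwards [(Metric.isOpen_ball.prod Metric.isOpen_ball).mem_nhds hoO] with q hq
      exact hUG q hq)
    filter_upwards [hBo.mem_nhds h0B] with q hq
    exact (sub_eq_zero.1 (hzero q hq)).symm

/-! ### Rescaling -/

theorem mon_smul {n : ℕ} (l : ℂ) (q : (Fin n → ℂ) × (Fin n → ℂ)) : mon (l • q) = l ^ n * mon q := by
  simp [mon, Finset.prod_mul_distrib, mul_add]

/-- On real points `mon` is `2 Re (z₁⋯zₙ)`. -/
theorem mon_real {n : ℕ} (z : Fin n → ℂ) : mon (z, star z) = ((2 * (∏ i, z i).re : ℝ) : ℂ) := by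
  have : ∏ i, (star z) i = (starRingEnd ℂ) (∏ i, z i) := by simp [map_prod]
  rw [mon, this, Complex.add_conj]

theorem fderiv_rescale {n : ℕ} (G : (Fin n → ℂ) × (Fin n → ℂ) → ℂ) (c l : ℂ) :
    fderiv ℂ (fun q => c • G (l • q)) = fun q => (c * l) • fderiv ℂ G (l • q) := by
  funext q
  have h := fderiv_const_smul_field (𝕜 := ℂ) (f := fun q => G (l • q)) c
  have h1 : fderiv ℂ (fun q => c • G (l • q)) q = c • fderiv ℂ (fun q => G (l • q)) q := congrFun h q
  rw [h1, fderiv_comp_smul, smul_smul]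

theorem fderiv_fderiv_rescale {n : ℕ} (G : (Fin n → ℂ) × (Fin n → ℂ) → ℂ) (c l : ℂ)
    (q : (Fin n → ℂ) × (Fin n → ℂ)) :
    fderiv ℂ (fderiv ℂ (fun q => c • G (l • q))) q
      = (c * l * l) • fderiv ℂ (fderiv ℂ G) (l • q) := by
  rw [fderiv_rescale]
  have h := fderiv_const_smul_field (𝕜 := ℂ) (f := fun q => fderiv ℂ G (l • q)) (c * l)
  have h1 : fderiv ℂ (fun q => (c * l) • fderiv ℂ G (l • q)) q
      = (c * l) • fderiv ℂ (fun q => fderiv ℂ G (l • q)) q := congrFun h q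
  rw [h1, fderiv_comp_smul, smul_smul]

theorem LeviAt.rescale {n : ℕ} {G : (Fin n → ℂ) × (Fin n → ℂ) → ℂ} {c l : ℂ} (hc : c ≠ 0)
    (hl : l ≠ 0) {q : (Fin n → ℂ) × (Fin n → ℂ)} (h : LeviAt G (l • q)) :
    LeviAt (fun q => c • G (l • q)) q := by
  intro v u hv hu
  rw [fderiv_fderiv_rescale]
  rw [fderiv_rescale] at hv hu
  simp only [smul_apply, smul_eq_mul, mul_eq_zero, hc, hl, false_or] at hv hu ⊢
  exact h v u hv hu

/-- The complexification of `F` is `mon / 2` up to terms of order `n + 1`. -/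
theorem complexification_sub_mon {n : ℕ} {F H : (Fin n → ℂ) → ℝ}
    (hFeq : ∀ᶠ z in 𝓝 (0 : Fin n → ℂ), F z = (∏ i, z i).re + H z)
    (hHord : (fun z : Fin n → ℂ => H z) =O[𝓝 0] fun z => ‖z‖ ^ (n + 1))
    {FC : ((Fin n → ℂ) × (Fin n → ℂ)) → ℂ} (hFC : IsComplexification F FC) :
    (fun q => FC q - mon q / 2) =O[𝓝 0] fun q => ‖q‖ ^ (n + 1) := by
  refine isBigO_of_real_points (hFC.1.sub ((analyticAt_mon _).div analyticAt_const two_ne_zero)) ?_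
  refine Asymptotics.IsBigO.congr' (f₁ := fun z => ((H z : ℝ) : ℂ)) ?_ ?_ EventuallyEq.rfl
  · refine (Asymptotics.IsBigO.of_bound 1 ?_).trans hHord
    filter_upwards with z
    simp
  · filter_upwards [hFeq, hFC.2] with z h1 h2
    simp only [h2, h1, mon_real]
    push_cast
    ring

/-- A decomposition `a(z) + d(w) = U F_ℂ` with `U` a unit: rescale `F_ℂ` to a small perturbation
of `mon` and scale back. -/
theorem exists_decomposition {n : ℕ} (hn : 2 ≤ n) {F H : (Fin n → ℂ) → ℝ}
    (hFeq : ∀ᶠ z in 𝓝 (0 : Fin n → ℂ), F z = (∏ i, z i).re + H z)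
    (hHord : (fun z : Fin n → ℂ => H z) =O[𝓝 0] fun z => ‖z‖ ^ (n + 1))
    (hLF : LeviFlatGerm F)
    {FC : ((Fin n → ℂ) × (Fin n → ℂ)) → ℂ} (hFC : IsComplexification F FC) :
    ∃ (a d : (Fin n → ℂ) → ℂ) (U : (Fin n → ℂ) × (Fin n → ℂ) → ℂ),
      AnalyticAt ℂ a 0 ∧ AnalyticAt ℂ d 0 ∧ DifferentiableAt ℂ U 0 ∧ U 0 ≠ 0 ∧
      ∀ᶠ q in 𝓝 0, a q.1 + d q.2 = U q * FC q := by
  obtain ⟨C, hC0, hC⟩ := (complexification_sub_mon hFeq hHord hFC).exists_pos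
  obtain ⟨ε₁, hε₁, h1⟩ := Metric.eventually_nhds_iff.1
    (hC.bound.and hFC.1.eventually_analyticAt)
  obtain ⟨ε₂, hε₂, h2⟩ := Metric.eventually_nhds_iff.1
    (hFC.2.and (levi_complexified hLF hFC))
  simp only [dist_zero_right] at h1 h2
  have hLpos : 0 < radL n := by
    have h32 := one_le_pow32 n
    have hT := radT_ge n
    unfold radL; nlinarith
  -- the scale of the dilation
  obtain ⟨l, hl0, hl1, hl2, hl3⟩ : ∃ l : ℝ, 0 < l ∧ l * radL n < ε₁ ∧ l * radL n < ε₂ ∧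
      2 * C * l * radL n ^ (n + 1) < rho n := by
    have t1 : Tendsto (fun l : ℝ => l * radL n) (𝓝[>] 0) (𝓝 0) := by
      refine Tendsto.mono_left ?_ nhdsWithin_le_nhds
      have : Continuous fun l : ℝ => l * radL n := by fun_prop
      simpa using this.tendsto 0
    have t2 : Tendsto (fun l : ℝ => 2 * C * l * radL n ^ (n + 1)) (𝓝[>] 0) (𝓝 0) := by
      refine Tendsto.mono_left ?_ nhdsWithin_le_nhds
      have : Continuous fun l : ℝ => 2 * C * l * radL n ^ (n + 1) := by fun_prop
      simpa using this.tendsto 0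
    obtain ⟨l, h⟩ := (eventually_mem_nhdsWithin.and ((t1.eventually_lt_const hε₁).and
      ((t1.eventually_lt_const hε₂).and (t2.eventually_lt_const (rho_pos n))))).exists
    exact ⟨l, h.1, h.2.1, h.2.2.1, h.2.2.2⟩
  have hlC : (l : ℂ) ≠ 0 := by exact_mod_cast hl0.ne'
  set c : ℂ := 2 / (l : ℂ) ^ n with hc
  have hc0 : c ≠ 0 := div_ne_zero two_ne_zero (pow_ne_zero _ hlC)
  have hnl : ∀ {E : Type} [NormedAddCommGroup E] [NormedSpace ℂ E] (q : E),
      ‖(l : ℂ) • q‖ = l * ‖q‖ := fun q => by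
    rw [norm_smul, Complex.norm_real, Real.norm_of_nonneg hl0.le]
  have hscale : ∀ {q : (Fin n → ℂ) × (Fin n → ℂ)}, ‖q‖ ≤ radL n → ‖(l : ℂ) • q‖ < ε₁ :=
    fun {q} hq => by
      rw [hnl]; exact (mul_le_mul_of_nonneg_left hq hl0.le).trans_lt hl1
  have hscale₂ : ∀ {q : Fin n → ℂ}, ‖q‖ ≤ radL n → ‖(l : ℂ) • q‖ < ε₂ :=
    fun {q} hq => by
      rw [hnl]; exact (mul_le_mul_of_nonneg_left hq hl0.le).trans_lt hl2
  have hstar : ∀ p : Fin n → ℂ, (l : ℂ) • (p, star p) = ((l : ℂ) • p, star ((l : ℂ) • p)) :=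
    fun p => by
      ext i <;> simp
  have hlin : ∀ (t : ℂ) (q : (Fin n → ℂ) × (Fin n → ℂ)), AnalyticAt ℂ (fun q => t • q) q :=
    fun t q => AnalyticAt.fun_smul analyticAt_const analyticAt_id
  have hlin₁ : ∀ (t : ℂ) (q : Fin n → ℂ), AnalyticAt ℂ (fun q => t • q) q :=
    fun t q => AnalyticAt.fun_smul analyticAt_const analyticAt_id
  have hG : NearMon (n := n) (fun q => c • FC ((l : ℂ) • q)) := by
    constructor
    · intro q hq
      rw [mem_closedBall_zero_iff] at hq
      exact AnalyticAt.fun_smul analyticAt_const (AnalyticAt.fun_comp (f := fun q => (l : ℂ) • q)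
        (h1 (hscale hq)).2 (hlin _ _))
    · intro q hq
      rw [mem_closedBall_zero_iff] at hq
      have h3 := (h1 (hscale hq)).1
      have e : c • FC ((l : ℂ) • q) - mon q
          = c * (FC ((l : ℂ) • q) - mon ((l : ℂ) • q) / 2) := by
        rw [mon_smul, hc, smul_eq_mul]; field_simp
      have hcn : ‖c‖ = 2 / l ^ n := by
        rw [hc, norm_div, norm_pow, Complex.norm_real, Real.norm_of_nonneg hl0.le]; norm_num
      rw [norm_pow, norm_norm, hnl] at h3
      rw [e, norm_mul, hcn]
      calc 2 / l ^ n * ‖FC ((l : ℂ) • q) - mon ((l : ℂ) • q) / 2‖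
          ≤ 2 / l ^ n * (C * (l * ‖q‖) ^ (n + 1)) := by gcongr
        _ = 2 * C * l * ‖q‖ ^ (n + 1) := by rw [mul_pow, pow_succ l]; field_simp
        _ ≤ 2 * C * l * radL n ^ (n + 1) := by gcongr
        _ ≤ rho n := hl3.le
  have hreal : ∀ p : Fin n → ℂ, ‖p‖ ≤ radL n →
      ((fun q => c • FC ((l : ℂ) • q)) (p, star p)).im = 0 := by
    intro p hp
    have h3 := (h2 (hscale₂ hp)).1
    simp only [hstar, h3, hc, smul_eq_mul]
    have : (2 / (l : ℂ) ^ n * (F ((l : ℂ) • p) : ℂ)) = ((2 / l ^ n * F ((l : ℂ) • p) : ℝ) : ℂ) := by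
      push_cast; rfl
    rw [this, Complex.ofReal_im]
  have hL : ∀ p : Fin n → ℂ, ‖p‖ ≤ radL n → (fun q => c • FC ((l : ℂ) • q)) (p, star p) = 0 →
      fderiv ℂ (fun q => c • FC ((l : ℂ) • q)) (p, star p) ≠ 0 →
      LeviAt (fun q => c • FC ((l : ℂ) • q)) (p, star p) := by
    intro p hp h3 h4
    refine LeviAt.rescale hc0 hlC ?_
    rw [fderiv_rescale] at h4
    simp only [hstar] at h3 h4 ⊢
    refine (h2 (hscale₂ hp)).2 ((smul_eq_zero.1 h3).resolve_left hc0) fun h5 => h4 ?_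
    rw [h5]
    refine ContinuousLinearMap.ext fun v => ?_
    rw [smul_apply, zero_apply, smul_zero]
  set e : Fin n := ⟨0, by omega⟩
  obtain ⟨a, d, ha, hd, had⟩ := exists_first_integral hn hG hreal hL e
  obtain ⟨U, hU, hU0, hUG⟩ := exists_unit hn hG ha hd had
  have h0 : (0 : Fin n → ℂ) ∈ slab e 2 := by
    simp [slab]
  have hinv : ∀ q : (Fin n → ℂ) × (Fin n → ℂ), (l : ℂ) • (l : ℂ)⁻¹ • q = q := fun q =>
    smul_inv_smul₀ hlC q
  refine ⟨fun z => a ((l : ℂ)⁻¹ • z), fun w => d ((l : ℂ)⁻¹ • w),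
    fun q => c * U ((l : ℂ)⁻¹ • q), ?_, ?_, ?_, ?_, ?_⟩
  · refine AnalyticAt.fun_comp (f := fun z => (l : ℂ)⁻¹ • z) ?_ (hlin₁ _ _)
    rw [smul_zero]; exact (ha 0 h0).1
  · refine AnalyticAt.fun_comp (f := fun z => (l : ℂ)⁻¹ • z) ?_ (hlin₁ _ _)
    rw [smul_zero]; exact (hd 0 h0).1
  · refine DifferentiableAt.const_mul ?_ c
    refine DifferentiableAt.fun_comp' (f := fun q => (l : ℂ)⁻¹ • q) 0 ?_
      (hlin _ _).differentiableAt
    rw [smul_zero]; exact hU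
  · simpa using ⟨hc0, hU0⟩
  · have ht : Tendsto (fun q : (Fin n → ℂ) × (Fin n → ℂ) => (l : ℂ)⁻¹ • q) (𝓝 0) (𝓝 0) := by
      have := (hlin (l : ℂ)⁻¹ 0).continuousAt.tendsto
      rwa [smul_zero] at this
    filter_upwards [ht.eventually hUG] with q hq
    rw [hinv] at hq
    simp only [Prod.smul_fst, Prod.smul_snd] at hq
    rw [hq, smul_eq_mul]; ring

/-! ### From the decomposition to the holomorphic defining function -/

/-- If `F_ℂ = mon / 2 + O(n + 1)`, multiplication by a function `κ U` of value `1` at the origin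
does not change the term of order `n`. -/
theorem isBigO_unit_mul {n : ℕ} {FC U : (Fin n → ℂ) × (Fin n → ℂ) → ℂ}
    (hord : (fun q => FC q - mon q / 2) =O[𝓝 0] fun q => ‖q‖ ^ (n + 1))
    (hU : DifferentiableAt ℂ U 0) {κ : ℂ} (hκ : κ * U 0 = 1) :
    (fun q => κ * (U q * FC q) - mon q / 2) =O[𝓝 0] fun q => ‖q‖ ^ (n + 1) := by
  have h1 : (fun q : (Fin n → ℂ) × (Fin n → ℂ) => mon q) =O[𝓝 0] fun q => ‖q‖ ^ n := by
    refine Asymptotics.IsBigO.of_bound 2 (Eventually.of_forall fun q => ?_)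
    have key : ∀ z : Fin n → ℂ, ‖z‖ ≤ ‖q‖ → ‖∏ i, z i‖ ≤ ‖q‖ ^ n := fun z hz =>
      norm_prod_le_pow fun i => (norm_le_pi_norm z i).trans hz
    rw [norm_pow, norm_norm]
    have := norm_add_le (∏ i, q.1 i) (∏ i, q.2 i)
    have := key _ (norm_fst_le q)
    have := key _ (norm_snd_le q)
    rw [mon]; linarith
  have h2 : (fun q => U q - U 0) =O[𝓝 0] fun q => ‖q‖ := by
    simpa using hU.isBigO_sub.norm_right
  have h3 : (fun q => κ * U q) =O[𝓝 0] fun _ => (1 : ℝ) :=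
    (hU.continuousAt.const_mul κ).tendsto.isBigO_one ℝ
  have h4 : (fun q => κ * U q * (FC q - mon q / 2)) =O[𝓝 0] fun q => ‖q‖ ^ (n + 1) := by
    simpa using h3.mul hord
  have h5 : (fun q => κ / 2 * ((U q - U 0) * mon q)) =O[𝓝 0] fun q => ‖q‖ ^ (n + 1) := by
    have := (h2.mul h1).const_mul_left (κ / 2)
    simpa [pow_succ'] using this
  refine (h4.add h5).congr_left fun q => ?_
  linear_combination (-mon q / 2) * hκ

/-- **Theorem 3.** A singular Levi-flat hypersurface `{Re(z₁⋯zₙ) + O(|z|^{n+1}) = 0}`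
whose complexified singular set is the expected union of linear subspaces `V_{ijkℓ}`
and is contained in the closure of `Sing(L_ℂ)` is defined by the vanishing of the real
part of a holomorphic function `f(z) = z₁⋯zₙ + O(|z|^{n+1})`. -/
theorem stmt_2 (n : ℕ) (hn : 2 ≤ n) (F H : (Fin n → ℂ) → ℝ)
    (hF : AnalyticAt ℝ F 0) (hH : AnalyticAt ℝ H 0)
    -- `F(z) = Re(z₁ ⋯ zₙ) + H(z, z̄)` with `H = O(|z|^{n+1})`
    (hFeq : ∀ᶠ z in 𝓝 (0 : Fin n → ℂ), F z = (∏ i, z i).re + H z)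
    (hHord : (fun z : Fin n → ℂ => H z) =O[𝓝 0] fun z => ‖z‖ ^ (n + 1))
    -- `M = {F = 0}` is a singular hypersurface at `0`
    (hF0 : F 0 = 0) (hsing : fderiv ℝ F 0 = 0)
    (hirr : IrreducibleRGerm F)
    (hLF : LeviFlatGerm F)
    (FC : ((Fin n → ℂ) × (Fin n → ℂ)) → ℂ) (hFC : IsComplexification F FC)
    -- `Sing(M_ℂ)` is the union of the subspaces `V_{ijkℓ} = {z_i = z_j = w_k = w_ℓ = 0}`
    (hSingMC : ∀ᶠ p in 𝓝 (0 : (Fin n → ℂ) × (Fin n → ℂ)),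
      (p ∈ singMC FC ↔ ∃ i j k l : Fin n, i < j ∧ k < l ∧
        p.1 i = 0 ∧ p.1 j = 0 ∧ p.2 k = 0 ∧ p.2 l = 0))
    -- `Sing(M_ℂ)` is contained in the closure of `Sing(L_ℂ)`
    (hcl : ∃ U ∈ 𝓝 (0 : (Fin n → ℂ) × (Fin n → ℂ)),
      singMC FC ∩ U ⊆ closure (singLC FC)) :
    ∃ f : (Fin n → ℂ) → ℂ, AnalyticAt ℂ f 0 ∧
      -- `f(z) = z₁ ⋯ zₙ + O(|z|^{n+1})`
      ((fun z : Fin n → ℂ => f z - ∏ i, z i) =O[𝓝 0] fun z => ‖z‖ ^ (n + 1)) ∧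
      -- `M = {Re(f) = 0}` as germs of sets at `0`
      (∀ᶠ z in 𝓝 (0 : Fin n → ℂ), (F z = 0 ↔ (f z).re = 0)) := by
  obtain ⟨a, d, U, ha, hd, hU, hU0, hdec⟩ := exists_decomposition hn hFeq hHord hLF hFC
  have hord := isBigO_unit_mul (complexification_sub_mon hFeq hHord hFC) hU
    (inv_mul_cancel₀ hU0)
  set κ : ℂ := (U 0)⁻¹ with hκ
  have hFC0 : FC 0 = 0 := by
    have := hFC.2.self_of_nhds
    rw [hF0, star_zero, Complex.ofReal_zero] at this
    exact this
  have had0 : a 0 + d 0 = 0 := by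
    have := hdec.self_of_nhds
    rwa [hFC0, mul_zero] at this
  have hB : AnalyticAt ℂ (fun z => κ * a z + star (κ * d (star z))) 0 :=
    (analyticAt_const.mul ha).add (analyticAt_star_star (analyticAt_const.mul hd))
  have hB0 : (κ * a 0 + star (κ * d 0)).re = 0 := by
    have h1 : (κ * a 0 + star (κ * d 0)).re = (κ * (a 0 + d 0)).re := by
      rw [mul_add, Complex.add_re, Complex.add_re]; rfl
    rw [h1, had0, mul_zero, Complex.zero_re]
  refine ⟨fun z => κ * a z + star (κ * d (star z)) - (κ * a 0 + star (κ * d 0)),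
    hB.sub analyticAt_const, ?_, ?_⟩
  · have t1 : Tendsto (fun z : Fin n → ℂ => (z, (0 : Fin n → ℂ))) (𝓝 0) (𝓝 0) :=
      Continuous.tendsto' (by fun_prop) _ _ rfl
    have t2 : Tendsto (fun z : Fin n → ℂ => ((0 : Fin n → ℂ), star z)) (𝓝 0) (𝓝 0) :=
      Continuous.tendsto' (by fun_prop) _ _ (by simp)
    have z0 : ∏ i : Fin n, (0 : Fin n → ℂ) i = 0 := by
      simp; omega
    have h1 := hord.comp_tendsto t1
    have h2 := hord.comp_tendsto t2
    have h2' : (fun z : Fin n → ℂ => star (κ * (U (0, star z) * FC (0, star z))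
        - mon ((0 : Fin n → ℂ), star z) / 2)) =O[𝓝 0] fun z => ‖z‖ ^ (n + 1) := by
      refine (Asymptotics.IsBigO.of_bound 1 (Eventually.of_forall fun z => ?_)).trans
        (h2.trans (Asymptotics.IsBigO.of_bound 1 (Eventually.of_forall fun z => ?_)))
      · rw [norm_star, one_mul]; rfl
      · simp [Prod.norm_def]
    have h1' : (fun z : Fin n → ℂ => κ * (U (z, 0) * FC (z, 0))
        - mon (z, (0 : Fin n → ℂ)) / 2) =O[𝓝 0] fun z => ‖z‖ ^ (n + 1) := by
      refine h1.trans (Asymptotics.IsBigO.of_bound 1 (Eventually.of_forall fun z => ?_))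
      simp [Prod.norm_def]
    refine (h1'.add h2').congr' ?_ EventuallyEq.rfl
    filter_upwards [t1.eventually hdec, t2.eventually hdec] with z e1 e2
    have e3 : star (∏ i, (star z) i) = ∏ i, z i := by simp
    rw [← e1, ← e2]
    simp only [mon, z0, add_zero, zero_add, star_sub, star_mul', star_add, star_div₀, e3]
    have e4 : star (2 : ℂ) = 2 := by simp
    have e5 : d 0 = - a 0 := by linear_combination had0
    rw [e4, e5, star_neg]
    ring
  · have hcont : Tendsto (fun z : Fin n → ℂ => (κ * U (z, star z)).re) (𝓝 0) (𝓝 1) := by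
      have h1 := ((hU.continuousAt.const_mul κ).tendsto).comp tendsto_diag
      rw [hκ, inv_mul_cancel₀ hU0] at h1
      exact (Complex.continuous_re.tendsto 1).comp h1
    filter_upwards [hcont.eventually_const_lt zero_lt_one, hFC.2,
      tendsto_diag.eventually hdec] with z h1 h2 h3
    have h4 : (κ * a z + star (κ * d (star z)) - (κ * a 0 + star (κ * d 0))).re
        = (κ * U (z, star z)).re * F z := by
      have h5 : (κ * a z + star (κ * d (star z))).re = (κ * (a z + d (star z))).re := by
        rw [mul_add, Complex.add_re, Complex.add_re]; rfl
      rw [Complex.sub_re, hB0, h5, sub_zero, h3, h2, ← mul_assoc, Complex.re_mul_ofReal]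
    rw [h4, mul_eq_zero]
    exact ⟨Or.inr, fun h => h.resolve_left h1.ne'⟩
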